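/- arXiv:1301.5401 — 2 statements merged into one kernel-verified Lean document; each statement's English description precedes it below -/
import Mathlib

section
/- Let n, k be positive integers with n ≥ k and let S = (s_{ij}) be a Haar-distributed random matrix from the compact symplectic group Sp(2n). For any sequences i = (i_1,…,i_{2k}) and j = (j_1,…,j_{2k}) in {1,…,2n}, E[ s_{i_1 j_1} s_{i_2 j_2} ⋯ s_{i_{2k} j_{2k}} ] = Σ_{σ,τ ∈ M_{2k}} Δ'_σ(i) Δ'_τ(j) Wg^Sp(σ^{-1}τ; n). Moreover, for any n ≥ 1 and any odd number 2k+1 of factors, E[ s_{i_1 j_1} ⋯ s_{i_{2k+1} j_{2k+1}} ] = 0 for all index sequences. -/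
/-!
Fix `j`. As a tensor in `i`, both the moment `E[∏ s_{i_r j_r}]` and the Weingarten sum
(`wgSum`) are invariant under `Sp(2n)`: the former by invariance of the measure, the latter
because every `Δ'_σ` is invariant. Their difference `T` is therefore an invariant tensor, and it
has to be shown that it vanishes.

Both tensors have the same pairing with every `Δ'_ρ`, namely `Δ'_ρ(j)`. For the moment this is
`Sᵀ J S = J` (`sum_DeltaSp_mul_moment`). For the Weingarten sum it is the defining relation
`T^Sp ⋆ Wg^Sp = 1^ε` (`sum_DeltaSp_mul_wgSum`), because `T^Sp(ρ⁻¹σ)` is the Gram matrix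
`∑_i Δ'_ρ(i) Δ'_σ(i)` (`gram`). The Gram matrix is computed on a representative of the double
coset of `σ` that maps lower points to lower points and upper points to upper points
(`exists_normal_form`); such a representative exists because the union of two perfect matchings
is bipartite, and for it the components of `Γ(σ)` are the orbits of a permutation of the `k`
pairs.

So `T` is invariant and all its complete contractions with the symplectic form vanish
(`contrZero_of_orthogonal`). Such a tensor of degree `2k ≤ 2n` is zero
(`InvTensor.eq_zero_of_contrZero`): differentiating the invariance shows that `T` is annihilated
by `sp(2n, ℂ)`, and applying the Casimir element to the first slot against all slots gives
`(2n + 1) T + ∑ (2k - 1 slot transpositions of T) + contractions = 0`. The single contractions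
vanish by induction on `k`, and comparing the supremum norms, `2n + 1 > 2k - 1` forces `T = 0`.

The odd moments change sign under `S ↦ -S`, and `-1` is symplectic.
-/

/-!
Weingarten calculus for classical compact Lie groups and compact symmetric spaces
(S. Matsumoto, "Weingarten calculus for matrix ensembles associated with compact
symmetric spaces"): common definitions.

We index `{1,…,m}` by `Fin m` (0-indexed), so the pair `{2r-1, 2r}` becomes
`{2r, 2r+1}` for `r ∈ Fin k`.
-/

open MeasureTheory Finset Matrix

namespace WgPaper

/-- `lo r` is the (0-indexed) point `2r`, i.e. `2r - 1` in 1-indexed notation. -/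
def lo {k : ℕ} (i : Fin k) : Fin (2 * k) := ⟨2 * (i : ℕ), by have := i.isLt; omega⟩

/-- `hi r` is the (0-indexed) point `2r + 1`, i.e. `2r` in 1-indexed notation. -/
def hi {k : ℕ} (i : Fin k) : Fin (2 * k) := ⟨2 * (i : ℕ) + 1, by have := i.isLt; omega⟩

/-- Number of cycles of a permutation, counting fixed points as 1-cycles. -/
def cyc {m : ℕ} (σ : Equiv.Perm (Fin m)) : ℕ :=
  Multiset.card σ.cycleType + (Finset.univ.filter fun x => σ x = x).card

/-- Number of even-length cycles of a permutation. -/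
def evenCycles {m : ℕ} (σ : Equiv.Perm (Fin m)) : ℕ :=
  Multiset.card (σ.cycleType.filter fun d => d % 2 = 0)

/-- Number of odd-length cycles of a permutation, counting fixed points as 1-cycles. -/
def oddCycles {m : ℕ} (σ : Equiv.Perm (Fin m)) : ℕ :=
  Multiset.card (σ.cycleType.filter fun d => d % 2 = 1)
    + (Finset.univ.filter fun x => σ x = x).card

/-- The sign `ε(σ)` of a permutation, as an element of a commutative ring. -/
def sgn (R : Type*) [CommRing R] {m : ℕ} (σ : Equiv.Perm (Fin m)) : R :=
  ((Equiv.Perm.sign σ : ℤ) : R)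

/-- Full convolution on a finite group: `(f * g)(σ) = ∑_τ f(τ) g(τ⁻¹ σ)`. -/
def conv {G : Type*} [Group G] [Fintype G] {R : Type*} [CommRing R] (f g : G → R) : G → R :=
  fun σ => ∑ τ : G, f τ * g (τ⁻¹ * σ)

/-- The Dirac function at the identity permutation. -/
def deltaId {m : ℕ} {R : Type*} [CommRing R] : Equiv.Perm (Fin m) → R :=
  fun σ => if σ = 1 then 1 else 0

/-- The graph `Γ(σ)` on `{1,…,2k}` whose edges are `{2r-1, 2r}` and `{σ(2r-1), σ(2r)}`
(in 1-indexed notation) for `1 ≤ r ≤ k`. -/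
def Gamma {k : ℕ} (σ : Equiv.Perm (Fin (2 * k))) : SimpleGraph (Fin (2 * k)) :=
  SimpleGraph.fromRel fun a b =>
    (∃ r : Fin k, a = lo r ∧ b = hi r) ∨ ∃ r : Fin k, a = σ (lo r) ∧ b = σ (hi r)

/-- `c(σ)`, the number of connected components of `Γ(σ)`. -/
noncomputable def ccount {k : ℕ} (σ : Equiv.Perm (Fin (2 * k))) : ℕ :=
  Nat.card (Gamma σ).ConnectedComponent

/-- The number of vertices of a connected component of a graph. -/
noncomputable def compSize {V : Type*} {G : SimpleGraph V} (C : G.ConnectedComponent) : ℕ :=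
  Nat.card {v // G.connectedComponentMk v = C}

/-- `ℓe(σ)`: the number of connected components of `Γ(σ)` whose size is `≡ 0 (mod 4)`. -/
noncomputable def ecomp {k : ℕ} (σ : Equiv.Perm (Fin (2 * k))) : ℕ :=
  Nat.card {C : (Gamma σ).ConnectedComponent // compSize C % 4 = 0}

/-- `ℓo(σ)`: the number of connected components of `Γ(σ)` whose size is `≡ 2 (mod 4)`. -/
noncomputable def ocomp {k : ℕ} (σ : Equiv.Perm (Fin (2 * k))) : ℕ :=
  Nat.card {C : (Gamma σ).ConnectedComponent // compSize C % 4 = 2}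

/-- Membership in the hyperoctahedral subgroup `H_k ≤ S_{2k}`: each pair
`{2i-1, 2i}` is mapped onto some pair `{2j-1, 2j}`. -/
def IsHyper {k : ℕ} (ζ : Equiv.Perm (Fin (2 * k))) : Prop :=
  ∀ i : Fin k, ∃ j : Fin k, ({ζ (lo i), ζ (hi i)} : Finset (Fin (2 * k))) = {lo j, hi j}

/-- The defining property of the set `M_{2k}` of coset representatives of `S_{2k}/H_k`:
`σ(2i-1) < σ(2i)` for all `i` and `σ(1) < σ(3) < ⋯ < σ(2k-1)`. -/
def MProp {k : ℕ} (σ : Equiv.Perm (Fin (2 * k))) : Prop :=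
  (∀ i : Fin k, σ (lo i) < σ (hi i)) ∧ ∀ i j : Fin k, i < j → σ (lo i) < σ (lo j)

open scoped Classical in
/-- The set `M_{2k}` of coset representatives of `S_{2k}/H_k`, as a `Finset`. -/
noncomputable def Mset (k : ℕ) : Finset (Equiv.Perm (Fin (2 * k))) :=
  Finset.univ.filter MProp

/-- Reduced convolution: `(f ⋆ g)(σ) = ∑_{τ ∈ M_{2k}} f(τ) g(τ⁻¹ σ)`. -/
noncomputable def sconv {k : ℕ} {R : Type*} [CommRing R]
    (f g : Equiv.Perm (Fin (2 * k)) → R) : Equiv.Perm (Fin (2 * k)) → R :=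
  fun σ => ∑ τ ∈ Mset k, f τ * g (τ⁻¹ * σ)

open scoped Classical in
/-- The indicator function `1_k` of `H_k`. -/
noncomputable def oneH {k : ℕ} {R : Type*} [CommRing R] : Equiv.Perm (Fin (2 * k)) → R :=
  fun σ => if IsHyper σ then 1 else 0

open scoped Classical in
/-- The twisted indicator function `1_k^ε` of `H_k`: `σ ↦ ε(σ)` on `H_k`, `0` elsewhere. -/
noncomputable def oneHeps {k : ℕ} {R : Type*} [CommRing R] : Equiv.Perm (Fin (2 * k)) → R :=
  fun σ => if IsHyper σ then sgn R σ else 0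

/-- `δ_σ(i,j) = ∏_{s=1}^k δ_{i_{σ(s)}, j_s}`. -/
def deltaP {k : ℕ} {α : Type*} [DecidableEq α] {R : Type*} [CommRing R]
    (σ : Equiv.Perm (Fin k)) (i j : Fin k → α) : R :=
  ∏ s : Fin k, if i (σ s) = j s then 1 else 0

/-- `Δ_σ(i) = ∏_{s=1}^k δ_{i_{σ(2s-1)}, i_{σ(2s)}}`. -/
def DeltaO {k : ℕ} {α : Type*} [DecidableEq α] {R : Type*} [CommRing R]
    (σ : Equiv.Perm (Fin (2 * k))) (i : Fin (2 * k) → α) : R :=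
  ∏ s : Fin k, if i (σ (lo s)) = i (σ (hi s)) then 1 else 0

/-- The standard skew-symmetric matrix `J_n = ((O, I_n), (−I_n, O))`. -/
def Jmat (R : Type*) [CommRing R] (n : ℕ) : Matrix (Fin (2 * n)) (Fin (2 * n)) R :=
  Matrix.of fun p q =>
    if (p : ℕ) + n = (q : ℕ) then 1 else if (q : ℕ) + n = (p : ℕ) then -1 else 0

/-- `Δ'_σ(i) = ∏_{r=1}^k ⟨i_{σ(2r-1)}, i_{σ(2r)}⟩`, where `⟨p,q⟩` is the `(p,q)` entry
of `J_n`. -/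
def DeltaSp {k n : ℕ} (R : Type*) [CommRing R]
    (σ : Equiv.Perm (Fin (2 * k))) (i : Fin (2 * k) → Fin (2 * n)) : R :=
  ∏ s : Fin k, Jmat R n (i (σ (lo s))) (i (σ (hi s)))

/-- The signature matrix `I'_{a,n-a} = diag(I_a, −I_{n-a})`, of size `n`. -/
def Iab (R : Type*) [CommRing R] (n a : ℕ) : Matrix (Fin n) (Fin n) R :=
  Matrix.of fun p q => if p = q then (if (p : ℕ) < a then 1 else -1) else 0

/-- The signature matrix `I''_{a,n-a} = diag(I_a, −I_{n-a}, I_a, −I_{n-a})`, of size `2n`. -/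
def Ippab (R : Type*) [CommRing R] (n a : ℕ) : Matrix (Fin (2 * n)) (Fin (2 * n)) R :=
  Matrix.of fun p q => if p = q then (if (p : ℕ) % n < a then 1 else -1) else 0

/-- The unitary group `U(n)` of `n × n` complex unitary matrices. -/
abbrev UG (n : ℕ) := Matrix.unitaryGroup (Fin n) ℂ

/-- The real orthogonal group `O(n)`. -/
abbrev OG (n : ℕ) := Matrix.orthogonalGroup (Fin n) ℝ

noncomputable instance (n : ℕ) : MeasurableSpace (UG n) := borel _

noncomputable instance (n : ℕ) : MeasurableSpace (OG n) := borel _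

/-- A `2n × 2n` unitary matrix lies in the compact symplectic group `Sp(2n)`
iff `S J Sᵀ = J`. -/
def IsSymplectic {n : ℕ} (S : UG (2 * n)) : Prop :=
  (S : Matrix (Fin (2 * n)) (Fin (2 * n)) ℂ) * Jmat ℂ n
    * (S : Matrix (Fin (2 * n)) (Fin (2 * n)) ℂ)ᵀ = Jmat ℂ n

/-- The function `T^{D III}_n` on `S_{2k}`:
`σ ↦ ∑_p Δ_σ(p) ∏_{r=1}^k J_{p_{2r-1}, p_{2r}}`. -/
noncomputable def TDIII (n k : ℕ) : Equiv.Perm (Fin (2 * k)) → ℝ :=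
  fun σ => ∑ p : Fin (2 * k) → Fin (2 * n),
    DeltaO σ p * ∏ r : Fin k, Jmat ℝ n (p (lo r)) (p (hi r))

/-- The function `T^{C I}_n` on `S_{2k}`:
`σ ↦ ∑_p Δ'_σ(p) ∏_{r=1}^k (J I'_{nn})_{p_{2r-1}, p_{2r}}`. -/
noncomputable def TCI (n k : ℕ) : Equiv.Perm (Fin (2 * k)) → ℂ :=
  fun σ => ∑ p : Fin (2 * k) → Fin (2 * n),
    DeltaSp ℂ σ p * ∏ r : Fin k, (Jmat ℂ n * Iab ℂ (2 * n) n) (p (lo r)) (p (hi r))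

/-! ### The symplectic form and the symplectic group -/

/-- The involution `p ↦ p ± n` of the index set: the only `q` with `⟨p, q⟩ ≠ 0`. -/
def flipIdx {n : ℕ} (p : Fin (2 * n)) : Fin (2 * n) :=
  if h : (p : ℕ) < n then ⟨p + n, by omega⟩ else ⟨p - n, by omega⟩

lemma Jmat_apply (R : Type*) [CommRing R] {n : ℕ} (p q : Fin (2 * n)) :
    Jmat R n p q = if q = flipIdx p then (if (p : ℕ) < n then 1 else -1) else 0 := by
  have hp := p.isLt
  have hq := q.isLt
  unfold Jmat flipIdx
  simp only [Matrix.of_apply]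
  by_cases h : (p : ℕ) < n
  · simp only [h, dif_pos, if_true, Fin.ext_iff]
    by_cases h1 : (p : ℕ) + n = q
    · simp [h1]
    · have h2 : ¬ (q : ℕ) + n = p := by omega
      have h3 : ¬ (q : ℕ) = p + n := by omega
      simp [h1, h2, h3]
  · simp only [h, dif_neg, if_false, Fin.ext_iff, not_false_eq_true]
    have h1 : ¬ (p : ℕ) + n = q := by omega
    by_cases h2 : (q : ℕ) + n = p
    · have h3 : (q : ℕ) = p - n := by omega
      rw [if_neg h1, if_pos h2, if_pos h3]
    · have h3 : ¬ (q : ℕ) = p - n := by omega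
      simp [h1, h2, h3]

lemma Jmat_transpose (R : Type*) [CommRing R] (n : ℕ) : (Jmat R n)ᵀ = -Jmat R n := by
  ext p q
  have hp := p.isLt
  have hq := q.isLt
  simp only [Matrix.transpose_apply, Matrix.neg_apply, Jmat, Matrix.of_apply]
  by_cases h1 : (p : ℕ) + n = q
  · have h2 : ¬ (q : ℕ) + n = p := by omega
    simp [h1, h2]
  · by_cases h2 : (q : ℕ) + n = p <;> simp [h1, h2]

lemma Jmat_antisymm (R : Type*) [CommRing R] {n : ℕ} (p q : Fin (2 * n)) :
    Jmat R n q p = -Jmat R n p q := by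
  simpa using congrFun (congrFun (Jmat_transpose R n) p) q

lemma Jmat_mul_transpose (R : Type*) [CommRing R] (n : ℕ) :
    Jmat R n * (Jmat R n)ᵀ = 1 := by
  ext p q
  have hinj : flipIdx p = flipIdx q ↔ p = q := by
    refine ⟨fun h => ?_, fun h => by rw [h]⟩
    have := p.isLt
    have := q.isLt
    unfold flipIdx at h
    split_ifs at h <;> simp only [Fin.ext_iff] at h ⊢ <;> omega
  simp only [Matrix.mul_apply, Matrix.transpose_apply, Jmat_apply, Matrix.one_apply]
  by_cases h : p = q
  · subst h
    by_cases hp : (p : ℕ) < n <;> simp [hp]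
  · have : ∀ x, ¬ (x = flipIdx p ∧ x = flipIdx q) := by
      rintro x ⟨h1, h2⟩
      exact h (hinj.1 (h1.symm.trans h2))
    rw [if_neg h]
    refine Finset.sum_eq_zero fun x _ => ?_
    by_cases h1 : x = flipIdx p
    · rw [if_neg (c := x = flipIdx q) (fun h2 => this x ⟨h1, h2⟩), mul_zero]
    · rw [if_neg h1, zero_mul]

lemma Jmat_mul_self (R : Type*) [CommRing R] (n : ℕ) : Jmat R n * Jmat R n = -1 := by
  have h := Jmat_mul_transpose R n
  rw [Jmat_transpose, mul_neg] at h
  rw [← h, neg_neg]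

lemma sum_Jmat_mul (R : Type*) [CommRing R] {n : ℕ} (y z : Fin (2 * n)) :
    ∑ x, Jmat R n x y * Jmat R n x z = if y = z then 1 else 0 := by
  have h := congrFun (congrFun (Jmat_mul_transpose R n) y) z
  rw [Matrix.mul_apply, Matrix.one_apply] at h
  rw [← h]
  refine Finset.sum_congr rfl fun x _ => ?_
  rw [Matrix.transpose_apply, Jmat_antisymm R y x, Jmat_antisymm R z x]
  ring

lemma Jmat_conjTranspose (n : ℕ) : (Jmat ℂ n)ᴴ = -Jmat ℂ n := by
  rw [← Jmat_transpose]
  ext p q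
  simp only [Matrix.conjTranspose_apply, Matrix.transpose_apply, Jmat_apply]
  split_ifs <;> simp

/-- The defining relation `S J Sᵀ = J` also holds for `Sᵀ`. -/
lemma IsSymplectic.transpose_mul {n : ℕ} {S : UG (2 * n)} (h : IsSymplectic S) :
    (S : Matrix (Fin (2 * n)) (Fin (2 * n)) ℂ)ᵀ * Jmat ℂ n
      * (S : Matrix (Fin (2 * n)) (Fin (2 * n)) ℂ) = Jmat ℂ n := by
  unfold IsSymplectic at h
  set A := (S : Matrix (Fin (2 * n)) (Fin (2 * n)) ℂ)
  have hJ := Jmat_mul_self ℂ n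
  have h1 : A * (-(Jmat ℂ n * Aᵀ * Jmat ℂ n)) = 1 := by
    calc A * (-(Jmat ℂ n * Aᵀ * Jmat ℂ n)) = -((A * Jmat ℂ n * Aᵀ) * Jmat ℂ n) := by
          simp only [mul_neg, Matrix.mul_assoc]
      _ = 1 := by rw [h, hJ, neg_neg]
  have h2 := mul_eq_one_comm.1 h1
  calc Aᵀ * Jmat ℂ n * A = -((Jmat ℂ n * Jmat ℂ n) * (Aᵀ * Jmat ℂ n * A)) := by
        rw [hJ]; simp
    _ = Jmat ℂ n * (-(Jmat ℂ n * Aᵀ * Jmat ℂ n) * A) := by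
        simp only [Matrix.neg_mul, Matrix.mul_neg, Matrix.mul_assoc]
    _ = Jmat ℂ n := by rw [h2, mul_one]

/-! ### Invariant tensors and the infinitesimal action -/

/-- A tensor `T ∈ (ℂ^{2n})^{⊗N}`, given by its coordinates, is invariant under `Sp(2n)`. -/
def InvTensor {n N : ℕ} (T : (Fin N → Fin (2 * n)) → ℂ) : Prop :=
  ∀ g : UG (2 * n), IsSymplectic g → ∀ i,
    ∑ p : Fin N → Fin (2 * n),
      (∏ s, (g : Matrix (Fin (2 * n)) (Fin (2 * n)) ℂ) (i s) (p s)) * T p = T i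

/-- The `i`-th coordinate of the derivation action of a matrix `X` on the tensor `T`. -/
def lieAct {n N : ℕ} (T : (Fin N → Fin (2 * n)) → ℂ)
    (X : Matrix (Fin (2 * n)) (Fin (2 * n)) ℂ) (i : Fin N → Fin (2 * n)) : ℂ :=
  ∑ s, ∑ q, X (i s) q * T (Function.update i s q)

section
attribute [local instance] Matrix.linftyOpNormedRing Matrix.linftyOpNormedAlgebra

lemma hasDerivAt_exp_entry {ι : Type*} [Fintype ι] [DecidableEq ι] (X : Matrix ι ι ℂ) (a b : ι) :
    HasDerivAt (fun t : ℝ => NormedSpace.exp (t • X) a b) (X a b) 0 := by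
  have h : HasDerivAt (fun t : ℝ => NormedSpace.exp (t • X)) X 0 := by
    have h0 := hasDerivAt_exp_smul_const (𝕂 := ℝ) X (0 : ℝ)
    rw [zero_smul, NormedSpace.exp_zero, one_mul] at h0
    exact h0
  let L : Matrix ι ι ℂ →L[ℝ] ℂ :=
    LinearMap.toContinuousLinearMap (Matrix.entryLinearMap ℝ ℂ a b)
  exact (L.hasFDerivAt.comp_hasDerivAt 0 h)

end

/-- Expansion of the derivative of a product: only the `p` that agree with `i` off
the slot `s` contribute. -/
lemma sum_prod_erase {n N : ℕ} (T : (Fin N → Fin (2 * n)) → ℂ)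
    (X : Matrix (Fin (2 * n)) (Fin (2 * n)) ℂ) (i : Fin N → Fin (2 * n)) (s : Fin N) :
    ∑ p : Fin N → Fin (2 * n),
      ((∏ s' ∈ univ.erase s, (1 : Matrix (Fin (2 * n)) (Fin (2 * n)) ℂ) (i s') (p s'))
        * X (i s) (p s)) * T p = ∑ q, X (i s) q * T (Function.update i s q) := by
  classical
  symm
  refine Finset.sum_of_injOn (fun q => Function.update i s q) ?_ ?_ ?_ ?_
  · intro a _ b _ hab
    exact Function.update_injective i s hab
  · intro a _; simp
  · intro p _ hp
    have : ∃ s', s' ≠ s ∧ i s' ≠ p s' := by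
      by_contra hcon
      push Not at hcon
      apply hp
      refine ⟨p s, by simp, ?_⟩
      funext x
      by_cases hx : x = s
      · subst hx; simp
      · simp [hx, hcon x hx]
    obtain ⟨s', h1, h2⟩ := this
    rw [Finset.prod_eq_zero (i := s') (by simp [h1])]
    · simp
    · simp [h2]
  · intro q _
    rw [Finset.prod_eq_one]
    · simp
    · intro x hx
      rw [Function.update_of_ne (Finset.ne_of_mem_erase hx), Matrix.one_apply_eq]

/-- Differentiating the invariance along `exp (tX)` for `X` in the compact Lie algebra. -/
lemma InvTensor.lieAct_skew {n N : ℕ} {T : (Fin N → Fin (2 * n)) → ℂ} (hT : InvTensor T)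
    {X : Matrix (Fin (2 * n)) (Fin (2 * n)) ℂ} (hX : Xᴴ = -X)
    (hXJ : X * Jmat ℂ n + Jmat ℂ n * Xᵀ = 0) (i : Fin N → Fin (2 * n)) :
    lieAct T X i = 0 := by
  have hJ := Jmat_mul_self ℂ n
  have hunit : ∀ t : ℝ, NormedSpace.exp (t • X) ∈ Matrix.unitaryGroup (Fin (2 * n)) ℂ := by
    intro t
    rw [Matrix.mem_unitaryGroup_iff, Matrix.star_eq_conjTranspose, ← Matrix.exp_conjTranspose,
      Matrix.conjTranspose_smul, hX, star_trivial, smul_neg, Matrix.exp_neg]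
    refine Matrix.mul_nonsing_inv _ ((Matrix.isUnit_iff_isUnit_det _).1 ?_)
    exact Matrix.isUnit_exp _
  have hsymp : ∀ t : ℝ, IsSymplectic (⟨NormedSpace.exp (t • X), hunit t⟩ : UG (2 * n)) := by
    intro t
    unfold IsSymplectic
    have hJu : IsUnit (Jmat ℂ n) := IsUnit.of_mul_eq_one (-Jmat ℂ n) (by rw [mul_neg, hJ, neg_neg])
    have hJinv : (Jmat ℂ n)⁻¹ = -Jmat ℂ n :=
      Matrix.inv_eq_right_inv (by rw [mul_neg, hJ, neg_neg])
    have h1 : Jmat ℂ n * (t • X)ᵀ * (Jmat ℂ n)⁻¹ = -(t • X) := by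
      rw [Matrix.transpose_smul, Matrix.mul_smul, Matrix.smul_mul, ← smul_neg,
        eq_neg_of_add_eq_zero_right hXJ, hJinv]
      rw [Matrix.neg_mul, Matrix.mul_neg, Matrix.mul_assoc, hJ]
      simp
    have h2 := Matrix.exp_conj (Jmat ℂ n) (t • X)ᵀ hJu
    rw [h1, Matrix.exp_neg, Matrix.exp_transpose] at h2
    have h3 : NormedSpace.exp (t • X) * (NormedSpace.exp (t • X))⁻¹ = 1 := by
      refine Matrix.mul_nonsing_inv _ ((Matrix.isUnit_iff_isUnit_det _).1 ?_)
      exact Matrix.isUnit_exp _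
    rw [h2, hJinv] at h3
    have h4 : (NormedSpace.exp (t • X) * Jmat ℂ n * (NormedSpace.exp (t • X))ᵀ) * (-Jmat ℂ n) = 1 := by
      rw [← h3]; simp only [Matrix.mul_assoc]
    calc _ = (NormedSpace.exp (t • X) * Jmat ℂ n * (NormedSpace.exp (t • X))ᵀ) * (-Jmat ℂ n)
            * Jmat ℂ n := by
          rw [Matrix.mul_assoc _ (-Jmat ℂ n), Matrix.neg_mul, hJ, neg_neg, mul_one]
      _ = Jmat ℂ n := by rw [h4, one_mul]
  have hder : HasDerivAt (fun t : ℝ => ∑ p : Fin N → Fin (2 * n),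
      (∏ s, NormedSpace.exp (t • X) (i s) (p s)) * T p)
      (∑ p : Fin N → Fin (2 * n), (∑ s, (∏ s' ∈ univ.erase s,
        (1 : Matrix (Fin (2 * n)) (Fin (2 * n)) ℂ) (i s') (p s')) * X (i s) (p s)) * T p) 0 := by
    refine HasDerivAt.fun_sum fun p _ => HasDerivAt.mul_const ?_ _
    have := HasDerivAt.fun_finsetProd (u := univ) (x := (0 : ℝ))
      (f := fun (s : Fin N) (t : ℝ) => NormedSpace.exp (t • X) (i s) (p s))
      (f' := fun s => X (i s) (p s))
      (fun s _ => hasDerivAt_exp_entry X (i s) (p s))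
    simpa using this
  have hconst : (fun t : ℝ => ∑ p : Fin N → Fin (2 * n),
      (∏ s, NormedSpace.exp (t • X) (i s) (p s)) * T p) = fun _ => T i := by
    funext t
    exact hT ⟨_, hunit t⟩ (hsymp t) i
  rw [hconst] at hder
  have h0 := hder.unique (hasDerivAt_const (0 : ℝ) (T i))
  rw [← h0, lieAct, Finset.sum_congr rfl fun s _ => (sum_prod_erase T X i s).symm,
    Finset.sum_comm]
  exact Finset.sum_congr rfl fun p _ => (Finset.sum_mul _ _ _).symm

/-- By complexification, an invariant tensor is annihilated by all of `sp(2n, ℂ)`. -/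
lemma InvTensor.lieAct_eq_zero {n N : ℕ} {T : (Fin N → Fin (2 * n)) → ℂ} (hT : InvTensor T)
    {X : Matrix (Fin (2 * n)) (Fin (2 * n)) ℂ}
    (hXJ : X * Jmat ℂ n + Jmat ℂ n * Xᵀ = 0) (i : Fin N → Fin (2 * n)) :
    lieAct T X i = 0 := by
  have hJ := Jmat_mul_self ℂ n
  have hXH : Xᴴ * Jmat ℂ n + Jmat ℂ n * Xᴴᵀ = 0 := by
    have h1 := congrArg Matrix.conjTranspose hXJ
    rw [Matrix.conjTranspose_add, Matrix.conjTranspose_mul, Matrix.conjTranspose_mul,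
      Jmat_conjTranspose, Matrix.conjTranspose_zero] at h1
    have h2 : Xᵀᴴ = Xᴴᵀ := rfl
    rw [h2] at h1
    have h3 := congrArg (fun Y => Jmat ℂ n * Y * Jmat ℂ n) h1
    simp only [Matrix.mul_add, Matrix.add_mul, Matrix.mul_zero, Matrix.zero_mul] at h3
    rw [← h3]
    have e1 : Jmat ℂ n * (-Jmat ℂ n * Xᴴ) * Jmat ℂ n = Xᴴ * Jmat ℂ n := by
      rw [← Matrix.mul_assoc, Matrix.mul_neg, hJ, neg_neg, one_mul]
    have e2 : Jmat ℂ n * (Xᴴᵀ * -Jmat ℂ n) * Jmat ℂ n = Jmat ℂ n * Xᴴᵀ := by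
      rw [Matrix.mul_assoc, Matrix.mul_assoc, Matrix.neg_mul, hJ, neg_neg, mul_one]
    rw [e1, e2]
  -- the skew-Hermitian matrices `X - Xᴴ` and `i (X + Xᴴ)` span the complex line of `X`
  have hA := hT.lieAct_skew (X := X - Xᴴ) (by simp)
    (by
      rw [Matrix.transpose_sub, Matrix.sub_mul, Matrix.mul_sub]
      rw [sub_add_sub_comm, hXJ, hXH, sub_zero]) i
  have hB := hT.lieAct_skew (X := Complex.I • (X + Xᴴ))
    (by simp [add_comm])
    (by
      rw [Matrix.transpose_smul, Matrix.smul_mul, Matrix.mul_smul, ← smul_add,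
        Matrix.transpose_add, Matrix.add_mul, Matrix.mul_add]
      have : X * Jmat ℂ n + Xᴴ * Jmat ℂ n + (Jmat ℂ n * Xᵀ + Jmat ℂ n * Xᴴᵀ) = 0 := by
        rw [add_add_add_comm, hXJ, hXH, add_zero]
      rw [this, smul_zero]) i
  have hlin : (2 : ℂ) * lieAct T X i = lieAct T (X - Xᴴ) i
      - Complex.I * lieAct T (Complex.I • (X + Xᴴ)) i := by
    simp only [lieAct, Finset.mul_sum]
    rw [← Finset.sum_sub_distrib]
    refine Finset.sum_congr rfl fun s _ => ?_
    rw [← Finset.sum_sub_distrib]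
    refine Finset.sum_congr rfl fun q _ => ?_
    simp only [Matrix.sub_apply, Matrix.smul_apply, Matrix.add_apply, smul_eq_mul]
    linear_combination ((X (i s) q + Xᴴ (i s) q) * T (Function.update i s q)) * Complex.I_mul_I
  rw [hA, hB] at hlin
  simpa using hlin

/-! ### The Casimir relation -/

/-- The Casimir element of `sp(2n)`, acting on the first slot against all slots: on an invariant
tensor it gives a relation between `T`, its transposes and its contractions. -/
lemma InvTensor.casimir {n N : ℕ} {T : (Fin (N + 1) → Fin (2 * n)) → ℂ} (hT : InvTensor T)
    (i : Fin (N + 1) → Fin (2 * n)) :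
    (2 * (n : ℂ) + 1) * T i
      + ∑ s : Fin N, (T (i ∘ Equiv.swap 0 s.succ)
        + Jmat ℂ n (i s.succ) (i 0) * ∑ b, ∑ p, Jmat ℂ n b p *
            T (Function.update (Function.update i 0 b) s.succ p)) = 0 := by
  have hJ := Jmat_mul_self ℂ n
  have hX : ∀ b : Fin (2 * n), lieAct T
      (Matrix.single b (i 0) 1 + Jmat ℂ n * Matrix.single (i 0) b 1 * Jmat ℂ n)
      (Function.update i 0 b) = 0 := by
    intro b
    refine hT.lieAct_eq_zero ?_ _
    have e1 : (Matrix.single b (i 0) (1 : ℂ))ᵀ = Matrix.single (i 0) b 1 :=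
      Matrix.transpose_single _ _ _
    have e2 : (Matrix.single (i 0) b (1 : ℂ))ᵀ = Matrix.single b (i 0) 1 :=
      Matrix.transpose_single _ _ _
    rw [Matrix.transpose_add, Matrix.transpose_mul, Matrix.transpose_mul, e1, e2,
      Jmat_transpose, Matrix.add_mul, Matrix.mul_add]
    have e3 : Jmat ℂ n * Matrix.single (i 0) b 1 * Jmat ℂ n * Jmat ℂ n
        = -(Jmat ℂ n * Matrix.single (i 0) b 1) := by
      rw [Matrix.mul_assoc _ (Jmat ℂ n) (Jmat ℂ n), hJ, mul_neg, mul_one]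
    have e4 : Jmat ℂ n * (-Jmat ℂ n * (Matrix.single b (i 0) 1 * -Jmat ℂ n))
        = -(Matrix.single b (i 0) 1 * Jmat ℂ n) := by
      rw [← Matrix.mul_assoc, mul_neg, hJ, neg_neg, one_mul, mul_neg]
    rw [e3, e4]
    abel
  have hent : ∀ (b c q : Fin (2 * n)),
      (Matrix.single b (i 0) 1 + Jmat ℂ n * Matrix.single (i 0) b 1 * Jmat ℂ n :
        Matrix (Fin (2 * n)) (Fin (2 * n)) ℂ) c q
        = (if b = c ∧ i 0 = q then 1 else 0) + Jmat ℂ n c (i 0) * Jmat ℂ n b q := by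
    intro b c q
    rw [Matrix.add_apply, Matrix.single_apply, Matrix.mul_apply]
    congr 1
    rw [Finset.sum_eq_single b]
    · rw [Matrix.mul_single_apply_same, mul_one]
    · intro d _ hd
      rw [Matrix.mul_single_apply_of_ne _ _ _ _ _ hd, zero_mul]
    · simp
  have hsum : ∑ b, lieAct T
      (Matrix.single b (i 0) 1 + Jmat ℂ n * Matrix.single (i 0) b 1 * Jmat ℂ n)
      (Function.update i 0 b) = 0 := Finset.sum_eq_zero fun b _ => hX b
  rw [← hsum]
  simp only [lieAct, hent]
  rw [Finset.sum_comm, Fin.sum_univ_succ]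
  congr 1
  · -- the diagonal slot contributes the scalar `2n + 1`
    simp only [Function.update_self, true_and, Function.update_idem, add_mul]
    simp only [Finset.sum_add_distrib]
    congr 1
    · simp
    · rw [Finset.sum_comm]
      simp only [← Finset.sum_mul, sum_Jmat_mul]
      simp
  · refine Finset.sum_congr rfl fun s _ => ?_
    have hs : s.succ ≠ 0 := Fin.succ_ne_zero s
    simp only [Function.update_of_ne hs, add_mul, Finset.sum_add_distrib]
    congr 1
    · rw [Finset.sum_eq_single (i s.succ), Finset.sum_eq_single (i 0)]
      · simp only [and_self, if_true, one_mul]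
        congr 1
        funext x
        by_cases hx : x = s.succ
        · subst hx; simp
        · by_cases hx0 : x = 0
          · subst hx0; simp [Function.update_of_ne hx]
          · simp [Function.update_of_ne hx, Function.update_of_ne hx0,
              Equiv.swap_apply_of_ne_of_ne hx0 hx]
      · intro q _ hq
        simp [hq.symm]
      · simp
      · intro b _ hb
        simp [hb]
      · simp
    · simp only [Finset.mul_sum, mul_assoc]

/-! ### Contractions and the first fundamental theorem in the stable range -/

/-- Contraction of the first two slots of a tensor with the symplectic form. -/
def contr {n N : ℕ} (T : (Fin (N + 2) → Fin (2 * n)) → ℂ) : (Fin N → Fin (2 * n)) → ℂ :=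
  fun i => ∑ a, ∑ b, Jmat ℂ n a b * T (Matrix.vecCons a (Matrix.vecCons b i))

/-- All iterated contractions of `T` (after any permutations of the slots) vanish. -/
def ContrZero {n : ℕ} : (k : ℕ) → ((Fin (2 * k) → Fin (2 * n)) → ℂ) → Prop
  | 0, T => ∀ i, T i = 0
  | k + 1, T => ∀ π : Equiv.Perm (Fin (2 * k + 2)),
      ContrZero k (contr (N := 2 * k) fun i => T (i ∘ π))

lemma InvTensor.comp_perm {n N : ℕ} {T : (Fin N → Fin (2 * n)) → ℂ} (hT : InvTensor T)
    (π : Equiv.Perm (Fin N)) : InvTensor fun i => T (i ∘ π) := by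
  intro g hg i
  show _ = T (i ∘ π)
  rw [← hT g hg (i ∘ π)]
  refine Fintype.sum_equiv (Equiv.arrowCongr π.symm (Equiv.refl _)) _ _ fun p => ?_
  have : (Equiv.arrowCongr π.symm (Equiv.refl (Fin (2 * n)))) p = p ∘ π := by
    funext x; simp [Equiv.arrowCongr]
  rw [this]
  congr 1
  exact (Equiv.prod_comp π fun s =>
    (g : Matrix (Fin (2 * n)) (Fin (2 * n)) ℂ) (i s) (p s)).symm

lemma sum_vecCons {α M : Type*} [Fintype α] [AddCommMonoid M] {N : ℕ}
    (f : (Fin (N + 1) → α) → M) :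
    ∑ p, f p = ∑ a, ∑ q, f (Matrix.vecCons a q) := by
  rw [← Fintype.sum_prod_type']
  exact (Fintype.sum_equiv (Fin.consEquiv fun _ => α) _ _ fun _ => rfl).symm

lemma InvTensor.contr {n N : ℕ} {T : (Fin (N + 2) → Fin (2 * n)) → ℂ} (hT : InvTensor T) :
    InvTensor (contr T) := by
  intro g hg i
  have hJ := hg.transpose_mul
  set A := (g : Matrix (Fin (2 * n)) (Fin (2 * n)) ℂ)
  have hJe : ∀ c d, ∑ a, ∑ b, Jmat ℂ n a b * (A a c * A b d) = Jmat ℂ n c d := by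
    intro c d
    conv_rhs => rw [← hJ, Matrix.mul_apply]
    rw [Finset.sum_comm]
    refine Finset.sum_congr rfl fun b _ => ?_
    rw [Matrix.mul_apply, Finset.sum_mul]
    refine Finset.sum_congr rfl fun a _ => ?_
    rw [Matrix.transpose_apply]; ring
  symm
  calc WgPaper.contr T i
      = ∑ a, ∑ b, Jmat ℂ n a b * ∑ c, ∑ d, ∑ p : Fin N → Fin (2 * n),
          A a c * A b d * (∏ s, A (i s) (p s))
            * T (Matrix.vecCons c (Matrix.vecCons d p)) := by
        unfold WgPaper.contr
        refine Finset.sum_congr rfl fun a _ => Finset.sum_congr rfl fun b _ => ?_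
        congr 1
        rw [← hT g hg, sum_vecCons]
        refine Finset.sum_congr rfl fun c _ => ?_
        rw [sum_vecCons]
        refine Finset.sum_congr rfl fun d _ => Finset.sum_congr rfl fun p _ => ?_
        rw [Fin.prod_univ_succ, Fin.prod_univ_succ]
        simp only [Matrix.cons_val_zero, Matrix.cons_val_succ]
        ring
    _ = ∑ c, ∑ d, ∑ p : Fin N → Fin (2 * n), (∑ a, ∑ b, Jmat ℂ n a b * (A a c * A b d))
          * ((∏ s, A (i s) (p s)) * T (Matrix.vecCons c (Matrix.vecCons d p))) := by
        simp only [Finset.mul_sum, Finset.sum_mul]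
        simp only [← Fintype.sum_prod_type']
        exact Fintype.sum_equiv
          ⟨fun x => (x.2.2.1, x.2.2.2.1, x.2.2.2.2, x.1, x.2.1),
            fun y => (y.2.2.2.1, y.2.2.2.2, y.1, y.2.1, y.2.2.1), fun _ => rfl, fun _ => rfl⟩
          _ _ fun x => by dsimp only [Equiv.coe_fn_mk]; ring
    _ = ∑ p : Fin N → Fin (2 * n), (∏ s, A (i s) (p s)) * WgPaper.contr T p := by
        simp only [hJe, WgPaper.contr, Finset.mul_sum]
        simp only [← Fintype.sum_prod_type']
        exact Fintype.sum_equiv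
          ⟨fun x => (x.2.2, x.1, x.2.1), fun y => (y.2.1, y.2.2, y.1), fun _ => rfl, fun _ => rfl⟩
          _ _ fun x => by dsimp only [Equiv.coe_fn_mk]; ring

/-- A tensor of degree `2k ≤ 2n` that is invariant and all of whose complete contractions vanish
is zero. In the Casimir relation the contraction terms vanish by induction, and the remaining
`2k - 1` transposes are too few to balance the coefficient `2n + 1`. -/
lemma InvTensor.eq_zero_of_contrZero {n : ℕ} : ∀ (k : ℕ), k ≤ n →
    ∀ (T : (Fin (2 * k) → Fin (2 * n)) → ℂ), InvTensor T → ContrZero k T → ∀ i, T i = 0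
  | 0, _, _, _, h => h
  | k + 1, hk, T, hT, h => by
    have hc : ∀ π : Equiv.Perm (Fin (2 * k + 2)), ∀ i,
        WgPaper.contr (N := 2 * k) (fun i => T (i ∘ π)) i = 0 := fun π =>
      InvTensor.eq_zero_of_contrZero k (by omega) _
        (InvTensor.contr (N := 2 * k) (hT.comp_perm π)) (h π)
    have hzero : ∀ (s : Fin (2 * k + 1)) (i : Fin (2 * k + 2) → Fin (2 * n)),
        ∑ b, ∑ p, Jmat ℂ n b p * T (Function.update (Function.update i 0 b) s.succ p) = 0 := by
      intro s i
      have h1 := hc (Equiv.swap 1 s.succ) fun x => i (Equiv.swap 1 s.succ x.succ.succ)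
      rw [← h1]
      unfold WgPaper.contr
      refine Finset.sum_congr rfl fun b _ => Finset.sum_congr rfl fun p _ => ?_
      congr 2
      funext x
      have hs : (s.succ : Fin (2 * k + 2)) ≠ 0 := Fin.succ_ne_zero s
      have h10 : (1 : Fin (2 * k + 2)) ≠ 0 := by simp
      by_cases hx0 : x = 0
      · subst hx0
        rw [Function.update_of_ne hs.symm, Function.update_self, Function.comp_apply,
          Equiv.swap_apply_of_ne_of_ne h10.symm hs.symm, Matrix.cons_val_zero]
      · by_cases hx : x = s.succ
        · subst hx
          rw [Function.update_self, Function.comp_apply, Equiv.swap_apply_right]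
          rfl
        · rw [Function.update_of_ne hx, Function.update_of_ne hx0, Function.comp_apply]
          obtain ⟨y, hy⟩ : ∃ y : Fin (2 * k), Equiv.swap 1 s.succ x = y.succ.succ := by
            have e0 : Equiv.swap 1 s.succ x ≠ 0 := by
              intro h0
              rw [Equiv.swap_apply_eq_iff, Equiv.swap_apply_of_ne_of_ne h10.symm hs.symm] at h0
              exact hx0 h0
            have e1 : Equiv.swap 1 s.succ x ≠ 1 := by
              intro h0
              rw [Equiv.swap_apply_eq_iff, Equiv.swap_apply_left] at h0
              exact hx h0
            obtain ⟨z, hz⟩ := Fin.exists_succ_eq.2 e0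
            have hz0 : z ≠ 0 := by
              rintro rfl
              exact e1 (by rw [← hz]; rfl)
            obtain ⟨y, rfl⟩ := Fin.exists_succ_eq.2 hz0
            exact ⟨y, hz.symm⟩
          rw [hy, Matrix.cons_val_succ, Matrix.cons_val_succ, ← hy, Equiv.swap_apply_self]
    by_contra hne
    push Not at hne
    obtain ⟨i₀, hi₀⟩ := hne
    have : Nonempty (Fin (2 * (k + 1)) → Fin (2 * n)) := ⟨i₀⟩
    obtain ⟨i, hi⟩ := Finite.exists_max fun i => ‖T i‖
    have hcas := InvTensor.casimir (N := 2 * k + 1) hT i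
    simp only [hzero, mul_zero, add_zero] at hcas
    have hnorm : ‖(2 * (n : ℂ) + 1) * T i‖ ≤ (2 * k + 1) * ‖T i‖ := by
      rw [eq_neg_of_add_eq_zero_left hcas, norm_neg]
      refine (norm_sum_le _ _).trans ?_
      refine (Finset.sum_le_card_nsmul univ _ ‖T i‖ fun s _ => hi _).trans ?_
      simp
    rw [norm_mul] at hnorm
    have h2n : ‖(2 * (n : ℂ) + 1)‖ = 2 * n + 1 := by
      have : (2 * (n : ℂ) + 1) = ((2 * n + 1 : ℕ) : ℂ) := by push_cast; ring
      rw [this, Complex.norm_natCast]; push_cast; ring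
    rw [h2n] at hnorm
    have hpos : 0 < ‖T i‖ := (norm_pos_iff.2 hi₀).trans_le (hi i₀)
    have hkn : ((k : ℝ) + 1) ≤ n := by exact_mod_cast hk
    nlinarith

/-! ### The hyperoctahedral group -/

/-- `{1,…,2k}` as the disjoint union of the `k` pairs `{lo r, hi r}`; the Boolean tells whether
the point is the upper one of its pair. -/
def pairEquiv (k : ℕ) : Fin k × Bool ≃ Fin (2 * k) where
  toFun x := if x.2 then hi x.1 else lo x.1
  invFun y := (⟨y / 2, by omega⟩, decide ((y : ℕ) % 2 = 1))
  left_inv := by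
    rintro ⟨r, b⟩
    cases b <;> (simp [lo, hi, Fin.ext_iff]; try omega)
  right_inv := by
    intro y
    by_cases h : (y : ℕ) % 2 = 1
    · simp [hi, Fin.ext_iff, h]; omega
    · simp [lo, Fin.ext_iff, h]; omega

@[simp] lemma pairEquiv_false {k : ℕ} (r : Fin k) : pairEquiv k (r, false) = lo r := rfl
@[simp] lemma pairEquiv_true {k : ℕ} (r : Fin k) : pairEquiv k (r, true) = hi r := rfl
@[simp] lemma pairEquiv_symm_lo {k : ℕ} (r : Fin k) : (pairEquiv k).symm (lo r) = (r, false) := by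
  rw [Equiv.symm_apply_eq]; rfl
@[simp] lemma pairEquiv_symm_hi {k : ℕ} (r : Fin k) : (pairEquiv k).symm (hi r) = (r, true) := by
  rw [Equiv.symm_apply_eq]; rfl

/-- The fixed-point free involution exchanging the two points of each pair. -/
def mate {k : ℕ} : Equiv.Perm (Fin (2 * k)) :=
  (pairEquiv k).permCongr (Equiv.prodCongr (Equiv.refl _) Equiv.boolNot)

@[simp] lemma mate_pairEquiv {k : ℕ} (r : Fin k) (b : Bool) :
    mate (pairEquiv k (r, b)) = pairEquiv k (r, !b) := by
  simp [mate, Equiv.permCongr_apply]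

@[simp] lemma mate_lo {k : ℕ} (r : Fin k) : mate (lo r) = hi r := mate_pairEquiv r false
@[simp] lemma mate_hi {k : ℕ} (r : Fin k) : mate (hi r) = lo r := mate_pairEquiv r true

lemma pair_cases {k : ℕ} {p : Fin (2 * k) → Prop} (h0 : ∀ r, p (lo r)) (h1 : ∀ r, p (hi r))
    (x : Fin (2 * k)) : p x := by
  obtain ⟨⟨r, b⟩, rfl⟩ := (pairEquiv k).surjective x
  cases b
  · exact h0 r
  · exact h1 r

@[simp] lemma mate_mate {k : ℕ} (x : Fin (2 * k)) : mate (mate x) = x := by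
  revert x; exact pair_cases (by simp) (by simp)

lemma lo_ne_hi {k : ℕ} (r s : Fin k) : lo r ≠ hi s := by
  simp only [lo, hi, ne_eq, Fin.ext_iff]; omega

lemma lo_injective {k : ℕ} : Function.Injective (lo (k := k)) := by
  intro r s h
  simp only [lo, Fin.ext_iff] at h ⊢; omega

lemma mate_ne {k : ℕ} (x : Fin (2 * k)) : mate x ≠ x := by
  revert x
  exact pair_cases (fun r => by rw [mate_lo]; exact (lo_ne_hi r r).symm)
    (fun r => by rw [mate_hi]; exact lo_ne_hi r r)

/-- `H_k` is the centralizer of `mate`. -/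
lemma isHyper_iff {k : ℕ} {ζ : Equiv.Perm (Fin (2 * k))} :
    IsHyper ζ ↔ ∀ x, ζ (mate x) = mate (ζ x) := by
  constructor
  · intro h
    have key : ∀ r, ζ (hi r) = mate (ζ (lo r)) := by
      intro r
      obtain ⟨j, hj⟩ := h r
      have hne : ζ (lo r) ≠ ζ (hi r) := fun h => lo_ne_hi r r (ζ.injective h)
      have h1 : ζ (lo r) = lo j ∨ ζ (lo r) = hi j := by
        have : ζ (lo r) ∈ ({lo j, hi j} : Finset (Fin (2 * k))) := by rw [← hj]; simp
        simpa using this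
      have h2 : ζ (hi r) = lo j ∨ ζ (hi r) = hi j := by
        have : ζ (hi r) ∈ ({lo j, hi j} : Finset (Fin (2 * k))) := by rw [← hj]; simp
        simpa using this
      rcases h1 with h1 | h1 <;> rcases h2 with h2 | h2
      · exact absurd (h1.trans h2.symm) hne
      · rw [h1, h2, mate_lo]
      · rw [h1, h2, mate_hi]
      · exact absurd (h1.trans h2.symm) hne
    exact pair_cases (fun r => by rw [mate_lo, key]) (fun r => by rw [mate_hi, key, mate_mate])
  · intro h r
    have h1 : ζ (hi r) = mate (ζ (lo r)) := by rw [← h, mate_lo]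
    rw [h1]
    generalize ζ (lo r) = x
    revert x
    exact pair_cases (fun j => ⟨j, by rw [mate_lo]⟩)
      (fun j => ⟨j, by rw [mate_hi, Finset.pair_comm]⟩)

lemma IsHyper.mul {k : ℕ} {ζ ζ' : Equiv.Perm (Fin (2 * k))} (h : IsHyper ζ) (h' : IsHyper ζ') :
    IsHyper (ζ * ζ') := by
  rw [isHyper_iff] at *
  intro x
  rw [Equiv.Perm.mul_apply, Equiv.Perm.mul_apply, h', h]

lemma IsHyper.inv {k : ℕ} {ζ : Equiv.Perm (Fin (2 * k))} (h : IsHyper ζ) : IsHyper ζ⁻¹ := by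
  rw [isHyper_iff] at *
  intro x
  rw [Equiv.Perm.inv_eq_iff_eq, h]
  simp

lemma isHyper_one {k : ℕ} : IsHyper (1 : Equiv.Perm (Fin (2 * k))) := by
  rw [isHyper_iff]; simp

/-- The element of `H_k` that exchanges the points of the pairs `r` with `c r`, and then moves
the pairs by `π`. -/
def blockPerm {k : ℕ} (π : Equiv.Perm (Fin k)) (c : Fin k → Bool) : Equiv.Perm (Fin (2 * k)) :=
  (pairEquiv k).permCongr (Equiv.prodCongrLeft (fun _ : Bool => π) *
    Equiv.prodCongrRight fun r => if c r then Equiv.boolNot else 1)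

@[simp] lemma blockPerm_lo {k : ℕ} (π : Equiv.Perm (Fin k)) (c : Fin k → Bool) (r : Fin k) :
    blockPerm π c (lo r) = pairEquiv k (π r, c r) := by
  cases h : c r <;> simp [blockPerm, Equiv.permCongr_apply, h]

@[simp] lemma blockPerm_hi {k : ℕ} (π : Equiv.Perm (Fin k)) (c : Fin k → Bool) (r : Fin k) :
    blockPerm π c (hi r) = pairEquiv k (π r, !c r) := by
  cases h : c r <;> simp [blockPerm, Equiv.permCongr_apply, h]

lemma isHyper_blockPerm {k : ℕ} (π : Equiv.Perm (Fin k)) (c : Fin k → Bool) :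
    IsHyper (blockPerm π c) := by
  rw [isHyper_iff]
  exact pair_cases (by simp) (by simp)

lemma sign_boolNot : Equiv.Perm.sign (Equiv.boolNot : Equiv.Perm Bool) = -1 := by decide

lemma sgn_blockPerm {k : ℕ} (π : Equiv.Perm (Fin k)) (c : Fin k → Bool) :
    sgn ℂ (blockPerm π c) = ∏ r, if c r then -1 else 1 := by
  unfold sgn blockPerm
  rw [Equiv.Perm.sign_permCongr, Equiv.Perm.sign_mul, Equiv.Perm.sign_prodCongrLeft,
    Equiv.Perm.sign_prodCongrRight]
  have h1 : ∏ _b : Bool, Equiv.Perm.sign π = 1 := by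
    rw [Fintype.prod_bool, Int.units_mul_self]
  rw [h1, one_mul]
  push_cast
  refine Finset.prod_congr rfl fun r _ => ?_
  cases c r <;> simp [sign_boolNot]

lemma IsHyper.exists_blockPerm {k : ℕ} {ζ : Equiv.Perm (Fin (2 * k))} (h : IsHyper ζ) :
    ∃ π c, ζ = blockPerm π c := by
  rw [isHyper_iff] at h
  let f : Fin k → Fin k × Bool := fun r => (pairEquiv k).symm (ζ (lo r))
  have hf : ∀ r, ζ (lo r) = pairEquiv k (f r) := fun r => by simp [f]
  have hinj : Function.Injective fun r => (f r).1 := by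
    intro r s hrs
    have hrs : (f r).1 = (f s).1 := hrs
    by_cases hb : (f r).2 = (f s).2
    · exact lo_injective (ζ.injective (by rw [hf, hf, Prod.ext hrs hb]))
    · exfalso
      have h2 : (f s).2 = !(f r).2 := by
        cases h1 : (f r).2 <;> cases h2 : (f s).2 <;> simp_all
      have h3 : ζ (lo s) = ζ (hi r) := by
        rw [← mate_lo r, h, hf, hf]
        have h3 : f s = ((f r).1, !(f r).2) := Prod.ext hrs.symm h2
        rw [h3, ← mate_pairEquiv]
      exact lo_ne_hi s r (ζ.injective h3)
  refine ⟨Equiv.ofBijective _ (Finite.injective_iff_bijective.1 hinj), fun r => (f r).2, ?_⟩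
  ext1 x
  revert x
  refine pair_cases (fun r => ?_) (fun r => ?_)
  · rw [blockPerm_lo, hf]; rfl
  · rw [blockPerm_hi, ← mate_lo, h, hf, ← mate_pairEquiv]; rfl

lemma sgn_mul {k : ℕ} (σ τ : Equiv.Perm (Fin k)) : sgn ℂ (σ * τ) = sgn ℂ σ * sgn ℂ τ := by
  simp [sgn]

lemma sgn_inv {k : ℕ} (σ : Equiv.Perm (Fin k)) : sgn ℂ σ⁻¹ = sgn ℂ σ := by
  simp [sgn]

lemma sgn_mul_self {k : ℕ} (σ : Equiv.Perm (Fin k)) : sgn ℂ σ * sgn ℂ σ = 1 := by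
  unfold sgn
  rw [← Int.cast_mul, ← Units.val_mul, Int.units_mul_self]; simp

/-- `Δ'` is twisted by the sign under the right action of `H_k`. -/
lemma DeltaSp_mul_hyper {n k : ℕ} (σ : Equiv.Perm (Fin (2 * k))) {ζ : Equiv.Perm (Fin (2 * k))}
    (hζ : IsHyper ζ) (i : Fin (2 * k) → Fin (2 * n)) :
    DeltaSp ℂ (σ * ζ) i = sgn ℂ ζ * DeltaSp ℂ σ i := by
  obtain ⟨π, c, rfl⟩ := hζ.exists_blockPerm
  rw [sgn_blockPerm]
  unfold DeltaSp
  rw [← Equiv.prod_comp π fun s => Jmat ℂ n (i (σ (lo s))) (i (σ (hi s))),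
    ← Finset.prod_mul_distrib]
  refine Finset.prod_congr rfl fun r _ => ?_
  simp only [Equiv.Perm.mul_apply, blockPerm_lo, blockPerm_hi]
  cases c r
  · simp
  · simp [Jmat_antisymm ℂ (i (σ (lo (π r))))]

/-! ### Coset representatives -/

lemma mem_Mset {k : ℕ} {σ : Equiv.Perm (Fin (2 * k))} : σ ∈ Mset k ↔ MProp σ := by
  simp [Mset]

/-- Every coset of `H_k` meets `M_{2k}`: order the points of each pair, then sort the pairs by
their lower points. -/
lemma exists_mem_Mset {k : ℕ} (σ : Equiv.Perm (Fin (2 * k))) :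
    ∃ m ∈ Mset k, IsHyper (m⁻¹ * σ) := by
  let c : Fin k → Bool := fun r => decide (σ (hi r) < σ (lo r))
  let ζ := blockPerm 1 c
  have h1 : ∀ r, (σ * ζ) (lo r) < (σ * ζ) (hi r) := by
    intro r
    simp only [ζ, Equiv.Perm.mul_apply, blockPerm_lo, blockPerm_hi, Equiv.Perm.one_apply]
    by_cases h : σ (hi r) < σ (lo r)
    · simp [c, h]
    · have : σ (lo r) ≠ σ (hi r) := fun h => lo_ne_hi r r (σ.injective h)
      simp only [c, h, decide_false, pairEquiv_false, Bool.not_false, pairEquiv_true]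
      exact lt_of_le_of_ne (not_lt.1 h) this
  let f : Fin k → Fin (2 * k) := fun r => (σ * ζ) (lo r)
  let π := Tuple.sort f
  have h2 : StrictMono (f ∘ π) := by
    refine (Tuple.monotone_sort f).strictMono_of_injective ?_
    exact ((σ * ζ).injective.comp lo_injective).comp π.injective
  refine ⟨σ * ζ * blockPerm π fun _ => false, mem_Mset.2 ⟨fun r => ?_, fun r s hrs => ?_⟩, ?_⟩
  · rw [Equiv.Perm.mul_apply, Equiv.Perm.mul_apply (σ * ζ), blockPerm_lo, blockPerm_hi]
    exact h1 (π r)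
  · rw [Equiv.Perm.mul_apply, Equiv.Perm.mul_apply (σ * ζ), blockPerm_lo, blockPerm_lo]
    exact h2 hrs
  · have : (σ * ζ * blockPerm π fun _ => false)⁻¹ * σ = (ζ * blockPerm π fun _ => false)⁻¹ := by
      group
    rw [this]
    exact ((isHyper_blockPerm _ _).mul (isHyper_blockPerm _ _)).inv

lemma Mset_unique {k : ℕ} {m m' : Equiv.Perm (Fin (2 * k))} (hm : m ∈ Mset k) (hm' : m' ∈ Mset k)
    (h : IsHyper (m⁻¹ * m')) : m = m' := by
  obtain ⟨π, c, hζ⟩ := h.exists_blockPerm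
  rw [mem_Mset] at hm hm'
  have hm'e : m' = m * blockPerm π c := by rw [← hζ]; group
  have hc : ∀ r, c r = false := by
    intro r
    by_contra hcr
    have hcr : c r = true := by simpa using hcr
    have h1 := hm'.1 r
    rw [hm'e, Equiv.Perm.mul_apply, Equiv.Perm.mul_apply, blockPerm_lo, blockPerm_hi, hcr] at h1
    exact lt_asymm h1 (hm.1 (π r))
  have hmono : StrictMono fun r => m (lo r) := fun r s hrs => hm.2 r s hrs
  have hπ : StrictMono π := by
    intro r s hrs
    have h1 := hm'.2 r s hrs
    rw [hm'e, Equiv.Perm.mul_apply, Equiv.Perm.mul_apply, blockPerm_lo, blockPerm_lo, hc, hc] at h1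
    exact hmono.lt_iff_lt.1 h1
  have hπ1 : ∀ r, π r = r := by
    intro r
    let o : Fin k ≃o Fin k := hπ.orderIsoOfSurjective π π.surjective
    have : o = OrderIso.refl _ := Subsingleton.elim _ _
    exact congrFun (congrArg (fun (o : Fin k ≃o Fin k) => (o : Fin k → Fin k)) this) r
  rw [hm'e]
  ext1 x
  revert x
  exact pair_cases (fun r => by simp [hc, hπ1]) (fun r => by simp [hc, hπ1])

/-- A sum over `S_{2k} / H_k` does not change under left translation. -/
lemma sum_Mset_translate {k : ℕ} (F : Equiv.Perm (Fin (2 * k)) → ℂ)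
    (hF : ∀ σ ζ, IsHyper ζ → F (σ * ζ) = F σ) (ρ : Equiv.Perm (Fin (2 * k))) :
    ∑ σ ∈ Mset k, F (ρ * σ) = ∑ σ ∈ Mset k, F σ := by
  choose rep hrep hrepH using fun σ : Equiv.Perm (Fin (2 * k)) => exists_mem_Mset σ
  refine Finset.sum_bij (fun σ _ => rep (ρ * σ)) (fun σ _ => hrep _) ?_ ?_ ?_
  · intro σ hσ τ hτ h
    refine Mset_unique hσ hτ ?_
    have h1 := (hrepH (ρ * σ)).inv.mul (h ▸ hrepH (ρ * τ))
    have h2 : ((rep (ρ * σ))⁻¹ * (ρ * σ))⁻¹ * ((rep (ρ * σ))⁻¹ * (ρ * τ)) = σ⁻¹ * τ := by group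
    rwa [h2] at h1
  · intro m hm
    refine ⟨rep (ρ⁻¹ * m), hrep _, ?_⟩
    refine Mset_unique (hrep _) hm ?_
    have h1 := (hrepH (ρ * rep (ρ⁻¹ * m))).mul (hrepH (ρ⁻¹ * m))
    have h2 : (rep (ρ * rep (ρ⁻¹ * m)))⁻¹ * (ρ * rep (ρ⁻¹ * m)) *
        ((rep (ρ⁻¹ * m))⁻¹ * (ρ⁻¹ * m)) = (rep (ρ * rep (ρ⁻¹ * m)))⁻¹ * m := by group
    rwa [h2] at h1
  · intro σ _
    rw [← hF (rep (ρ * σ)) _ (hrepH (ρ * σ)), mul_inv_cancel_left]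

/-! ### Orbits of permutations and the sign -/

/-- The number of orbits of a permutation. -/
noncomputable def orbCount {α : Type*} (π : Equiv.Perm α) : ℕ :=
  Nat.card (Quotient (Equiv.Perm.SameCycle.setoid π))

/-- The orbits of `π` are its fixed points and its nontrivial cycles. -/
lemma orbCount_eq {α : Type*} [Fintype α] [DecidableEq α] (π : Equiv.Perm α) :
    orbCount π = Fintype.card (Function.fixedPoints π) + π.cycleFactorsFinset.card := by
  classical
  have e : Quotient (Equiv.Perm.SameCycle.setoid π) ≃
      Function.fixedPoints π ⊕ π.cycleFactorsFinset := by
    let F : α → Function.fixedPoints π ⊕ π.cycleFactorsFinset := fun x =>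
      if h : π x = x then Sum.inl ⟨x, h⟩ else
        Sum.inr ⟨π.cycleOf x, Equiv.Perm.cycleOf_mem_cycleFactorsFinset_iff.2
          (Equiv.Perm.mem_support.2 h)⟩
    have hF : ∀ x y, π.SameCycle x y ↔ F x = F y := by
      intro x y
      constructor
      · intro h
        by_cases hx : π x = x
        · have : x = y := by
            obtain ⟨m, hm⟩ := h
            rw [← hm]
            exact (Equiv.Perm.zpow_apply_eq_self_of_apply_eq_self hx m).symm
          rw [this]
        · have hy : ¬ π y = y := fun hy => hx (h.apply_eq_self_iff.2 hy)
          simp only [F, dif_neg hx, dif_neg hy, Sum.inr.injEq, Subtype.mk.injEq]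
          exact h.cycleOf_eq
      · intro h
        by_cases hx : π x = x
        · by_cases hy : π y = y
          · simp only [F, dif_pos hx, dif_pos hy] at h
            have h' : x = y := congrArg Subtype.val (Sum.inl.inj h)
            rw [h']
          · simp [F, hx, hy] at h
        · by_cases hy : π y = y
          · simp [F, hx, hy] at h
          · simp only [F, dif_neg hx, dif_neg hy, Sum.inr.injEq, Subtype.mk.injEq] at h
            have hxm : x ∈ (π.cycleOf y).support := by
              rw [← h, Equiv.Perm.mem_support, Equiv.Perm.cycleOf_apply_self]
              exact hx
            exact (Equiv.Perm.mem_support_cycleOf_iff.1 hxm).1.symm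
    refine Equiv.ofBijective (Quotient.lift F fun x y h => (hF x y).1 h) ⟨?_, ?_⟩
    · intro a b
      induction a, b using Quotient.inductionOn₂ with
      | _ x y => exact fun h => Quotient.sound ((hF x y).2 h)
    · rintro (⟨x, hx⟩ | ⟨c, hc⟩)
      · exact ⟨Quotient.mk _ x, dif_pos hx⟩
      · obtain ⟨hcyc, hcs⟩ := Equiv.Perm.mem_cycleFactorsFinset_iff.1 hc
        obtain ⟨x, hx, -⟩ := hcyc
        have hxs : x ∈ c.support := Equiv.Perm.mem_support.2 hx
        have hne : ¬ π x = x := by rw [← hcs x hxs]; exact hx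
        refine ⟨Quotient.mk _ x, ?_⟩
        show F x = _
        simp only [F, dif_neg hne, Sum.inr.injEq, Subtype.mk.injEq]
        exact (Equiv.Perm.cycle_is_cycleOf hxs hc).symm
  rw [orbCount, Nat.card_congr e, Nat.card_sum, Nat.card_eq_fintype_card,
    Nat.card_eq_fintype_card, Fintype.card_coe]

/-- A cycle of length `d` has sign `(-1)^(d+1)`, and the lengths of the orbits add up to `k`. -/
lemma sgn_eq_orbCount {k : ℕ} (π : Equiv.Perm (Fin k)) :
    sgn ℂ π = (-1) ^ (k + orbCount π) := by
  have h1 := orbCount_eq π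
  have h2 := Equiv.Perm.card_fixedPoints π
  have h3 := Equiv.Perm.sum_cycleType_le π
  rw [Fintype.card_fin] at h2 h3
  have h4 : Multiset.card π.cycleType = π.cycleFactorsFinset.card := by
    rw [Equiv.Perm.cycleType_def, Multiset.card_map]; rfl
  rw [sgn, Equiv.Perm.sign_of_cycleType, h4]
  push_cast
  have h5 : k + orbCount π = (π.cycleType.sum + π.cycleFactorsFinset.card)
      + 2 * Fintype.card (Function.fixedPoints π) := by
    rw [h1]; omega
  rw [h5, pow_add _ _ (2 * _), pow_mul]
  simp

/-- Functions constant along the orbits of `π`. -/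
lemma card_invariant {k : ℕ} (π : Equiv.Perm (Fin k)) (A : Type*) [Finite A] :
    Nat.card {y : Fin k → A // ∀ r, y (π r) = y r} = Nat.card A ^ orbCount π := by
  have e : {y : Fin k → A // ∀ r, y (π r) = y r} ≃
      (Quotient (Equiv.Perm.SameCycle.setoid π) → A) :=
    { toFun := fun y => Quotient.lift y.1 (by
        rintro a b ⟨m, hm⟩
        rw [← hm]
        have key : ∀ (m : ℕ) r, y.1 ((π ^ m) r) = y.1 r := by
          intro m
          induction m with
          | zero => simp
          | succ m ih => intro r; rw [pow_succ', Equiv.Perm.mul_apply, y.2, ih]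
        obtain ⟨m, rfl | rfl⟩ := m.eq_nat_or_neg
        · rw [zpow_natCast, key]
        · rw [← key m ((π ^ (-(m : ℤ))) a)]
          simp)
      invFun := fun g => ⟨fun r => g (Quotient.mk _ r), fun r => by
        refine congrArg g (Quotient.sound (s := Equiv.Perm.SameCycle.setoid π) ?_)
        exact ((Equiv.Perm.sameCycle_apply_left (f := π)).2
          (Equiv.Perm.SameCycle.refl _ _))⟩
      left_inv := fun y => rfl
      right_inv := fun g => by
        funext q
        induction q using Quotient.inductionOn
        rfl }
  rw [Nat.card_congr e, Nat.card_fun, orbCount]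

/-- Functions constant along the connected components of a graph. -/
lemma card_adj_invariant {V : Type*} [Finite V] (G : SimpleGraph V) (A : Type*) [Finite A] :
    Nat.card {f : V → A // ∀ a b, G.Adj a b → f a = f b} =
      Nat.card A ^ Nat.card G.ConnectedComponent := by
  have e : {f : V → A // ∀ a b, G.Adj a b → f a = f b} ≃ (G.ConnectedComponent → A) :=
    { toFun := fun f => SimpleGraph.ConnectedComponent.lift f.1 (by
        intro v w p _
        induction p with
        | nil => rfl
        | cons h p ih =>
          rename_i hp
          exact (f.2 _ _ h).trans (ih hp.of_cons))
      invFun := fun g => ⟨fun v => g (G.connectedComponentMk v), fun a b h => by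
        show g (G.connectedComponentMk a) = g (G.connectedComponentMk b)
        rw [SimpleGraph.ConnectedComponent.connectedComponentMk_eq_of_adj h]⟩
      left_inv := fun f => rfl
      right_inv := fun g => by
        funext q
        induction q using SimpleGraph.ConnectedComponent.ind
        rfl }
  rw [Nat.card_congr e, Nat.card_fun]

/-! ### Two-colouring the union of two perfect matchings -/

/-- For two fixed-point free involutions `s, t`, no orbit of `t s` meets its image under `s`:
the group generated by `s` and `t` is dihedral, and otherwise a reflection would have a
fixed point. -/
lemma not_sameCycle_of_involutions {V : Type*} {s t : Equiv.Perm V}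
    (hs : ∀ x, s (s x) = x) (ht : ∀ x, t (t x) = x) (hs' : ∀ x, s x ≠ x) (ht' : ∀ x, t x ≠ x)
    (x : V) : ¬ (t * s).SameCycle x (s x) := by
  have hsinv : s⁻¹ = s := by
    ext1 x; rw [Equiv.Perm.inv_eq_iff_eq, hs]
  have hconj : s * (t * s) * s⁻¹ = (t * s)⁻¹ := by
    have htinv : t⁻¹ = t := by
      ext1 x; rw [Equiv.Perm.inv_eq_iff_eq, ht]
    rw [_root_.mul_inv_rev, htinv, hsinv]
    ext1 x; simp [hs]
  have hz : ∀ (m : ℤ) x, s (((t * s) ^ m) x) = ((t * s) ^ (-m)) (s x) := by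
    intro m x
    have h1 : s * (t * s) ^ m * s⁻¹ = (t * s) ^ (-m) := by
      rw [← conj_zpow, hconj, _root_.inv_zpow, _root_.zpow_neg]
    rw [← h1]
    simp
  rintro ⟨m, hm⟩
  obtain ⟨l, hl | hl⟩ := m.even_or_odd'
  · have h1 : ((t * s) ^ l) x = ((t * s) ^ (-l)) (s x) := by
      rw [← hm, ← Equiv.Perm.mul_apply, ← _root_.zpow_add, hl]
      congr 2; ring
    rw [← hz] at h1
    exact hs' _ h1.symm
  · have h1 : ((t * s) ^ (1 + l)) x = ((t * s) ^ (-l)) (s x) := by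
      rw [← hm, ← Equiv.Perm.mul_apply, ← _root_.zpow_add, hl]
      congr 2; ring
    rw [← hz, _root_.zpow_add, _root_.zpow_one, Equiv.Perm.mul_apply, Equiv.Perm.mul_apply] at h1
    exact ht' _ h1

/-- The union of two perfect matchings is bipartite: `s` exchanges the orbits of `t s` in pairs
without fixing any, and comparing orbit representatives selects one orbit of each pair. -/
lemma exists_coloring {V : Type*} [LinearOrder V] {s t : Equiv.Perm V}
    (hs : ∀ x, s (s x) = x) (ht : ∀ x, t (t x) = x) (hs' : ∀ x, s x ≠ x) (ht' : ∀ x, t x ≠ x) :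
    ∃ w : V → Bool, (∀ x, w (s x) = !w x) ∧ ∀ x, w (t x) = !w x := by
  let q : V → V := fun x => (Quotient.mk (Equiv.Perm.SameCycle.setoid (t * s)) x).out
  have hq : ∀ x y, q x = q y ↔ (t * s).SameCycle x y := by
    intro x y
    simp only [q, Quotient.out_inj]
    exact Quotient.eq
  have hne : ∀ x, q x ≠ q (s x) := fun x h =>
    not_sameCycle_of_involutions hs ht hs' ht' x ((hq _ _).1 h)
  have hρ : ∀ x, q (t (s x)) = q x := fun x =>
    (hq _ _).2 ((Equiv.Perm.sameCycle_apply_left (f := t * s)).2 (Equiv.Perm.SameCycle.refl _ _))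
  have hw : ∀ x, decide (q (s x) < q (s (s x))) = !decide (q x < q (s x)) := by
    intro x
    rw [hs]
    rcases lt_or_gt_of_ne (hne x) with h | h
    · simp [h, h.le]
    · simp [h, h.le]
  refine ⟨fun x => decide (q x < q (s x)), hw, fun x => ?_⟩
  have h1 : q (t x) = q (s x) := by
    have := hρ (s x)
    rwa [hs] at this
  have h2 : q (s (t x)) = q x := by
    have := hρ (s (t x))
    rw [hs, ht] at this
    exact this.symm
  show decide (q (t x) < q (s (t x))) = _
  rw [h1, h2, ← hw, hs]

/-- Every double coset of `H_k` contains an element preserving the lower and the upper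
points. -/
lemma exists_normal_form {k : ℕ} (σ : Equiv.Perm (Fin (2 * k))) :
    ∃ (ζ₁ ζ₂ : Equiv.Perm (Fin (2 * k))) (α β : Equiv.Perm (Fin k)), IsHyper ζ₁ ∧ IsHyper ζ₂ ∧
      σ * ζ₂ = ζ₁ * (pairEquiv k).permCongr
        (Equiv.prodCongrLeft fun b : Bool => if b then β else α) := by
  obtain ⟨w, hw1, hw2⟩ := exists_coloring (s := mate (k := k)) (t := σ * mate * σ⁻¹)
    mate_mate (by simp) mate_ne (by
      intro x h
      refine mate_ne (σ⁻¹ x) (σ.injective ?_)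
      simpa using h)
  have hw2' : ∀ x, w (σ (mate x)) = !w (σ x) := by
    intro x
    have := hw2 (σ x)
    simpa using this
  let ζ₁ : Equiv.Perm (Fin (2 * k)) := blockPerm 1 fun r => w (lo r)
  let ζ₂ : Equiv.Perm (Fin (2 * k)) := blockPerm 1 fun r => w (σ (lo r))
  have h1 : ∀ r b, w (ζ₁ (pairEquiv k (r, b))) = b := by
    intro r b
    have hlo : w (ζ₁ (lo r)) = false := by
      simp only [ζ₁, blockPerm_lo, Equiv.Perm.one_apply]
      cases h : w (lo r)
      · simpa using h
      · rw [pairEquiv_true, ← mate_lo, hw1, h]; rfl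
    cases b
    · exact hlo
    · rw [pairEquiv_true, ← mate_lo, isHyper_iff.1 (isHyper_blockPerm _ _), hw1]
      exact congrArg _ hlo
  have h2 : ∀ r b, w (σ (ζ₂ (pairEquiv k (r, b)))) = b := by
    intro r b
    have hlo : w (σ (ζ₂ (lo r))) = false := by
      simp only [ζ₂, blockPerm_lo, Equiv.Perm.one_apply]
      cases h : w (σ (lo r))
      · simpa using h
      · rw [pairEquiv_true, ← mate_lo, hw2', h]; rfl
    cases b
    · exact hlo
    · rw [pairEquiv_true, ← mate_lo, isHyper_iff.1 (isHyper_blockPerm _ _), hw2']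
      exact congrArg _ hlo
  let τ : Equiv.Perm (Fin k × Bool) := (pairEquiv k).symm.permCongr (ζ₁⁻¹ * σ * ζ₂)
  have hτ : ∀ x, ζ₁ (pairEquiv k (τ x)) = σ (ζ₂ (pairEquiv k x)) := by
    intro x; simp [τ, Equiv.permCongr_apply]
  have hτ2 : ∀ x, (τ x).2 = x.2 := by
    intro x
    rw [← h1 (τ x).1 (τ x).2, ← h2 x.1 x.2]
    exact congrArg w (hτ x)
  have hinj : ∀ b, Function.Injective fun r => (τ (r, b)).1 := by
    intro b r s h
    have : τ (r, b) = τ (s, b) := Prod.ext h (by rw [hτ2, hτ2])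
    exact congrArg Prod.fst (τ.injective this)
  let γ : Bool → Equiv.Perm (Fin k) := fun b =>
    Equiv.ofBijective _ (Finite.injective_iff_bijective.1 (hinj b))
  refine ⟨ζ₁, ζ₂, γ false, γ true, isHyper_blockPerm _ _, isHyper_blockPerm _ _, ?_⟩
  ext1 x
  obtain ⟨⟨r, b⟩, rfl⟩ := (pairEquiv k).surjective x
  have hR : ∀ τ' : Equiv.Perm (Fin k × Bool),
      (pairEquiv k).permCongr τ' (pairEquiv k (r, b)) = pairEquiv k (τ' (r, b)) := by
    intro τ'
    rw [Equiv.permCongr_apply, Equiv.symm_apply_apply]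
  rw [Equiv.Perm.mul_apply, Equiv.Perm.mul_apply, ← hτ, hR]
  congr 2
  refine Prod.ext ?_ (hτ2 _)
  cases b <;> rfl

/-- In the normal form, the components of `Γ(σ)` correspond to the orbits of `β α⁻¹`. -/
lemma ccount_normal_form {k : ℕ} {σ ζ₁ ζ₂ : Equiv.Perm (Fin (2 * k))} {α β : Equiv.Perm (Fin k)}
    (h₁ : IsHyper ζ₁) (h₂ : IsHyper ζ₂)
    (h : σ * ζ₂ = ζ₁ * (pairEquiv k).permCongr
        (Equiv.prodCongrLeft fun b : Bool => if b then β else α)) :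
    ccount σ = orbCount (β * α⁻¹) := by
  rw [isHyper_iff] at h₁ h₂
  have hlo : ∀ r, σ (ζ₂ (lo r)) = ζ₁ (lo (α r)) := by
    intro r
    have := congrArg (fun τ : Equiv.Perm (Fin (2 * k)) => τ (lo r)) h
    simpa [Equiv.permCongr_apply] using this
  have hhi : ∀ r, σ (ζ₂ (hi r)) = ζ₁ (hi (β r)) := by
    intro r
    have := congrArg (fun τ : Equiv.Perm (Fin (2 * k)) => τ (hi r)) h
    simpa [Equiv.permCongr_apply] using this
  have hinv : ∀ f : Fin (2 * k) → Bool, (∀ a b, (Gamma σ).Adj a b → f a = f b) ↔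
      (∀ x, f (mate x) = f x) ∧ ∀ x, f (σ (mate x)) = f (σ x) := by
    intro f
    constructor
    · intro hf
      have e1 : ∀ r, f (lo r) = f (hi r) := fun r => hf _ _ (by
        rw [Gamma, SimpleGraph.fromRel_adj]
        exact ⟨lo_ne_hi r r, Or.inl (Or.inl ⟨r, rfl, rfl⟩)⟩)
      have e2 : ∀ r, f (σ (lo r)) = f (σ (hi r)) := fun r => hf _ _ (by
        rw [Gamma, SimpleGraph.fromRel_adj]
        exact ⟨fun h => lo_ne_hi r r (σ.injective h), Or.inl (Or.inr ⟨r, rfl, rfl⟩)⟩)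
      exact ⟨pair_cases (fun r => by rw [mate_lo, e1]) (fun r => by rw [mate_hi, e1]),
        pair_cases (fun r => by rw [mate_lo, e2]) (fun r => by rw [mate_hi, e2])⟩
    · rintro ⟨hf1, hf2⟩ a b hab
      rw [Gamma, SimpleGraph.fromRel_adj] at hab
      rcases hab.2 with (⟨r, rfl, rfl⟩ | ⟨r, rfl, rfl⟩) | (⟨r, rfl, rfl⟩ | ⟨r, rfl, rfl⟩)
      · rw [← hf1, mate_lo]
      · rw [← hf2, mate_lo]
      · rw [← hf1, mate_hi]
      · rw [← hf2, mate_hi]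
  have e : {f : Fin (2 * k) → Bool // ∀ a b, (Gamma σ).Adj a b → f a = f b} ≃
      {y : Fin k → Bool // ∀ r, y ((β * α⁻¹) r) = y r} :=
    { toFun := fun f => ⟨fun r => f.1 (ζ₁ (lo r)), fun r => by
        obtain ⟨hf1, hf2⟩ := (hinv f.1).1 f.2
        obtain ⟨r, rfl⟩ := α.surjective r
        have hα : (β * α⁻¹) (α r) = β r := by simp
        rw [hα]
        show f.1 (ζ₁ (lo (β r))) = f.1 (ζ₁ (lo (α r)))
        rw [← hlo, ← hf1, ← h₁, mate_lo, ← hhi, ← mate_lo, h₂, hf2]⟩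
      invFun := fun y => ⟨fun x => y.1 ((pairEquiv k).symm (ζ₁⁻¹ x)).1, by
        rw [hinv]
        have hy : ∀ r, y.1 (β r) = y.1 (α r) := fun r => by
          have := y.2 (α r)
          simpa using this
        constructor
        · intro x
          obtain ⟨z, rfl⟩ := ζ₁.surjective x
          rw [← h₁]
          revert z
          exact pair_cases (by simp) (by simp)
        · intro x
          obtain ⟨z, rfl⟩ := ζ₂.surjective x
          rw [← h₂]
          revert z
          exact pair_cases (by simp [hlo, hhi, hy]) (by simp [hlo, hhi, hy])⟩
      left_inv := by
        rintro ⟨f, hf⟩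
        obtain ⟨hf1, -⟩ := (hinv f).1 hf
        ext x
        obtain ⟨z, rfl⟩ := ζ₁.surjective x
        revert z
        refine pair_cases (by simp) fun r => ?_
        have hr : ((pairEquiv k).symm (ζ₁⁻¹ (ζ₁ (hi r)))).1 = r := by simp
        simp only [hr]
        rw [← hf1, ← h₁, mate_lo]
      right_inv := by
        rintro ⟨y, hy⟩
        ext r
        simp }
  have h1 := card_adj_invariant (Gamma σ) Bool
  rw [Nat.card_congr e, card_invariant] at h1
  have hB : Nat.card Bool = 2 := by simp
  rw [hB] at h1
  exact (Nat.pow_right_injective le_rfl h1).symm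

/-! ### The Gram matrix of the tensors `Δ'` -/

lemma DeltaSp_mul {n k : ℕ} (ρ σ : Equiv.Perm (Fin (2 * k))) (i : Fin (2 * k) → Fin (2 * n)) :
    DeltaSp ℂ (ρ * σ) i = DeltaSp ℂ σ (i ∘ ρ) := rfl

lemma sum_comp_perm {N : ℕ} {A : Type*} [Fintype A] (F : (Fin N → A) → ℂ)
    (π : Equiv.Perm (Fin N)) : ∑ i : Fin N → A, F (i ∘ π) = ∑ i, F i := by
  refine Fintype.sum_equiv (Equiv.arrowCongr π.symm (Equiv.refl A)) _ _ fun p => ?_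
  congr 1

/-- The pairing of two `Δ'` in normal form counts the functions constant along the orbits. -/
lemma gram_normal_form {n k : ℕ} (α β : Equiv.Perm (Fin k)) :
    ∑ i : Fin (2 * k) → Fin (2 * n), DeltaSp ℂ 1 i * DeltaSp ℂ ((pairEquiv k).permCongr
        (Equiv.prodCongrLeft fun b : Bool => if b then β else α)) i
      = (2 * (n : ℂ)) ^ orbCount (β * α⁻¹) := by
  classical
  let e : (Fin (2 * k) → Fin (2 * n)) ≃ (Fin k → Fin (2 * n)) × (Fin k → Fin (2 * n)) :=
    { toFun := fun i => (i ∘ lo, i ∘ hi)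
      invFun := fun x z => if ((pairEquiv k).symm z).2 then x.2 ((pairEquiv k).symm z).1
        else x.1 ((pairEquiv k).symm z).1
      left_inv := fun i => by
        funext z; revert z
        exact pair_cases (by simp) (by simp)
      right_inv := fun x => by
        refine Prod.ext ?_ ?_ <;> funext r <;> simp }
  have hσ : ∀ i : Fin (2 * k) → Fin (2 * n), DeltaSp ℂ 1 i * DeltaSp ℂ ((pairEquiv k).permCongr
        (Equiv.prodCongrLeft fun b : Bool => if b then β else α)) i
      = ∏ r, (Jmat ℂ n ((e i).1 r) ((e i).2 r) *
          Jmat ℂ n ((e i).1 r) ((e i).2 ((β * α⁻¹) r))) := by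
    intro i
    rw [Finset.prod_mul_distrib]
    congr 1
    unfold DeltaSp
    rw [← Equiv.prod_comp α fun r => Jmat ℂ n ((e i).1 r) ((e i).2 ((β * α⁻¹) r))]
    refine Finset.prod_congr rfl fun r _ => ?_
    simp [Equiv.permCongr_apply, e]
  rw [Finset.sum_congr rfl fun i _ => hσ i]
  rw [Equiv.sum_comp e fun x : (Fin k → Fin (2 * n)) × (Fin k → Fin (2 * n)) =>
    ∏ r, (Jmat ℂ n (x.1 r) (x.2 r) * Jmat ℂ n (x.1 r) (x.2 ((β * α⁻¹) r)))]
  rw [Fintype.sum_prod_type_right]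
  have hy : ∀ y : Fin k → Fin (2 * n), ∑ x : Fin k → Fin (2 * n),
      ∏ r, (Jmat ℂ n (x r) (y r) * Jmat ℂ n (x r) (y ((β * α⁻¹) r)))
      = if ∀ r, y ((β * α⁻¹) r) = y r then 1 else 0 := by
    intro y
    have h1 := Finset.prod_univ_sum (fun _ : Fin k => (univ : Finset (Fin (2 * n))))
      (fun r a => Jmat ℂ n a (y r) * Jmat ℂ n a (y ((β * α⁻¹) r)))
    rw [Fintype.piFinset_univ] at h1
    rw [← h1]
    simp only [sum_Jmat_mul]
    rw [Finset.prod_ite_zero]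
    simp [eq_comm]
  simp only [hy]
  have h2 := card_invariant (β * α⁻¹) (Fin (2 * n))
  rw [Nat.card_eq_fintype_card, Fintype.card_subtype, Nat.card_eq_fintype_card,
    Fintype.card_fin] at h2
  rw [Finset.sum_boole, h2]
  push_cast; ring

/-- The Gram matrix of the `Δ'_σ` is `T^Sp`. -/
lemma gram {n k : ℕ} (ρ σ : Equiv.Perm (Fin (2 * k))) :
    ∑ i : Fin (2 * k) → Fin (2 * n), DeltaSp ℂ ρ i * DeltaSp ℂ σ i
      = (-1 : ℂ) ^ k * sgn ℂ (ρ⁻¹ * σ) * (-(2 * (n : ℂ))) ^ ccount (ρ⁻¹ * σ) := by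
  have h0 : ∑ i : Fin (2 * k) → Fin (2 * n), DeltaSp ℂ ρ i * DeltaSp ℂ σ i
      = ∑ i : Fin (2 * k) → Fin (2 * n), DeltaSp ℂ 1 i * DeltaSp ℂ (ρ⁻¹ * σ) i := by
    rw [← sum_comp_perm (fun i => DeltaSp ℂ 1 i * DeltaSp ℂ (ρ⁻¹ * σ) i) ρ]
    refine Finset.sum_congr rfl fun i _ => ?_
    rw [← DeltaSp_mul, ← DeltaSp_mul, mul_one, mul_inv_cancel_left]
  rw [h0]
  generalize ρ⁻¹ * σ = τ
  obtain ⟨ζ₁, ζ₂, α, β, h₁, h₂, h⟩ := exists_normal_form τ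
  have hc := ccount_normal_form h₁ h₂ h
  set τ' := (pairEquiv k).permCongr (Equiv.prodCongrLeft fun b : Bool => if b then β else α)
    with hτ'
  have hs : sgn ℂ τ' = (-1) ^ (k + ccount τ) := by
    rw [hc, ← sgn_eq_orbCount, hτ', sgn, Equiv.Perm.sign_permCongr, Equiv.Perm.sign_prodCongrLeft,
      Fintype.prod_bool, sgn_mul, sgn_inv]
    simp [sgn]
  have hst : sgn ℂ τ = sgn ℂ ζ₁ * sgn ℂ ζ₂ * (-1) ^ (k + ccount τ) := by
    have h3 := congrArg (sgn ℂ) h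
    rw [sgn_mul, sgn_mul, hs] at h3
    calc sgn ℂ τ = sgn ℂ τ * sgn ℂ ζ₂ * sgn ℂ ζ₂ := by rw [mul_assoc, sgn_mul_self, mul_one]
      _ = _ := by rw [h3]; ring
  have hterm : ∀ i : Fin (2 * k) → Fin (2 * n), DeltaSp ℂ 1 i * DeltaSp ℂ τ i
      = sgn ℂ ζ₁ * sgn ℂ ζ₂ * (DeltaSp ℂ 1 (i ∘ ζ₁) * DeltaSp ℂ τ' (i ∘ ζ₁)) := by
    intro i
    rw [← DeltaSp_mul, ← DeltaSp_mul, ← h, DeltaSp_mul_hyper _ h₂, mul_one,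
      ← one_mul ζ₁, DeltaSp_mul_hyper _ h₁, one_mul]
    linear_combination (-(DeltaSp ℂ 1 i * DeltaSp ℂ τ i) * (sgn ℂ ζ₂ * sgn ℂ ζ₂)) *
      sgn_mul_self ζ₁ - (DeltaSp ℂ 1 i * DeltaSp ℂ τ i) * sgn_mul_self ζ₂
  rw [Finset.sum_congr rfl fun i _ => hterm i, ← Finset.mul_sum,
    sum_comp_perm (fun i => DeltaSp ℂ 1 i * DeltaSp ℂ τ' i) ζ₁, gram_normal_form, ← hc, hst,
    neg_pow (2 * (n : ℂ)), pow_add]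
  have hk : (-1 : ℂ) ^ k * (-1) ^ k = 1 := by rw [← mul_pow]; simp
  have hcc : (-1 : ℂ) ^ ccount τ * (-1) ^ ccount τ = 1 := by rw [← mul_pow]; simp
  linear_combination (-(sgn ℂ ζ₁ * sgn ℂ ζ₂ * (2 * (n : ℂ)) ^ ccount τ) *
    ((-1 : ℂ) ^ ccount τ * (-1) ^ ccount τ)) * hk
    - (sgn ℂ ζ₁ * sgn ℂ ζ₂ * (2 * (n : ℂ)) ^ ccount τ) * hcc

/-! ### Pairing with the tensors `Δ'` -/

/-- A tensor orthogonal to every `Δ'_σ` has vanishing complete contractions, since a complete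
contraction is the pairing with some `Δ'_σ`. -/
lemma contrZero_of_orthogonal {n : ℕ} : ∀ (k : ℕ) (T : (Fin (2 * k) → Fin (2 * n)) → ℂ),
    (∀ σ, ∑ i, DeltaSp ℂ σ i * T i = 0) → ContrZero k T
  | 0, T, h => by
    intro i
    have h1 := h 1
    rw [Fintype.sum_eq_single i fun j hj => absurd (funext fun x => x.elim0) hj] at h1
    simpa [DeltaSp] using h1
  | k + 1, T, h => by
    intro π
    refine contrZero_of_orthogonal k _ fun σ => ?_
    -- the permutation fixing the first pair and acting as `σ` on the others
    let ext : Equiv.Perm (Fin (2 * k + 2)) :=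
      Equiv.Perm.decomposeFin.symm (0, Equiv.Perm.decomposeFin.symm (0, σ))
    have hext0 : ext 0 = 0 := by
      simp [ext, Equiv.Perm.decomposeFin_symm_apply_zero]
    have hext1 : ext (Fin.succ 0) = Fin.succ 0 := by
      rw [Equiv.Perm.decomposeFin_symm_apply_succ, Equiv.Perm.decomposeFin_symm_apply_zero]
      simp
    have hexts : ∀ x, ext x.succ.succ = (σ x).succ.succ := by
      intro x
      rw [Equiv.Perm.decomposeFin_symm_apply_succ, Equiv.Perm.decomposeFin_symm_apply_succ]
      simp
    have hΔ : ∀ (a b : Fin (2 * n)) (i : Fin (2 * k) → Fin (2 * n)),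
        DeltaSp (k := k + 1) ℂ ext (Matrix.vecCons a (Matrix.vecCons b i))
          = Jmat ℂ n a b * DeltaSp ℂ σ i := by
      intro a b i
      unfold DeltaSp
      rw [Fin.prod_univ_succ]
      refine congrArg₂ (· * ·) ?_ (Finset.prod_congr rfl fun r _ => ?_)
      · show Jmat ℂ n (Matrix.vecCons a (Matrix.vecCons b i) (ext 0))
          (Matrix.vecCons a (Matrix.vecCons b i) (ext (Fin.succ 0))) = _
        rw [hext0, hext1]; rfl
      · have e1 : (lo r.succ : Fin (2 * k + 2)) = (lo r).succ.succ := by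
          ext; simp [lo]; ring
        have e2 : (hi r.succ : Fin (2 * k + 2)) = (hi r).succ.succ := by
          ext; simp [hi]; ring
        show Jmat ℂ n (Matrix.vecCons a (Matrix.vecCons b i) (ext (lo r.succ)))
          (Matrix.vecCons a (Matrix.vecCons b i) (ext (hi r.succ))) = _
        rw [e1, e2, hexts, hexts]
        rfl
    have h1 : ∑ p : Fin (2 * k + 2) → Fin (2 * n),
        DeltaSp (k := k + 1) ℂ ext p * T (p ∘ π) = 0 := by
      rw [← h (π⁻¹ * ext), ← sum_comp_perm (fun p => DeltaSp ℂ (π⁻¹ * ext) p * T p) π]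
      refine Finset.sum_congr rfl fun p _ => ?_
      congr 1
      have := DeltaSp_mul (k := k + 1) π (π⁻¹ * ext) p
      rw [mul_inv_cancel_left] at this
      exact this
    rw [sum_vecCons, Finset.sum_congr rfl fun a _ => sum_vecCons _] at h1
    rw [← h1]
    simp only [contr, Finset.mul_sum]
    simp only [← Fintype.sum_prod_type']
    exact Fintype.sum_equiv
      ⟨fun x => (x.2.1, x.2.2, x.1), fun y => (y.2.2, y.1, y.2.1), fun _ => rfl, fun _ => rfl⟩
      _ _ fun x => by
        dsimp only [Equiv.coe_fn_mk]
        rw [hΔ]; ring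

/-- A matrix preserving the symplectic form preserves its tensor products `Δ'_ρ`. -/
lemma sum_DeltaSp_mul_prod {n k : ℕ} {A : Matrix (Fin (2 * n)) (Fin (2 * n)) ℂ}
    (hA : Aᵀ * Jmat ℂ n * A = Jmat ℂ n) (ρ : Equiv.Perm (Fin (2 * k)))
    (j : Fin (2 * k) → Fin (2 * n)) :
    ∑ p : Fin (2 * k) → Fin (2 * n), DeltaSp ℂ ρ p * ∏ s, A (p s) (j s) = DeltaSp ℂ ρ j := by
  have hJ : ∀ c d, ∑ x : Fin (2 * n) × Fin (2 * n), Jmat ℂ n x.1 x.2 * (A x.1 c * A x.2 d)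
      = Jmat ℂ n c d := by
    intro c d
    conv_rhs => rw [← hA, Matrix.mul_apply]
    rw [Fintype.sum_prod_type, Finset.sum_comm]
    refine Finset.sum_congr rfl fun b _ => ?_
    rw [Matrix.mul_apply, Finset.sum_mul]
    refine Finset.sum_congr rfl fun a _ => ?_
    rw [Matrix.transpose_apply]; ring
  let e : (Fin (2 * k) → Fin (2 * n)) ≃ (Fin k → Fin (2 * n) × Fin (2 * n)) :=
    { toFun := fun i r => (i (lo r), i (hi r))
      invFun := fun x z => if ((pairEquiv k).symm z).2 then (x ((pairEquiv k).symm z).1).2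
        else (x ((pairEquiv k).symm z).1).1
      left_inv := fun i => by
        funext z; revert z
        exact pair_cases (by simp) (by simp)
      right_inv := fun x => by
        funext r; simp }
  rw [← sum_comp_perm _ ρ⁻¹]
  have hterm : ∀ p : Fin (2 * k) → Fin (2 * n),
      DeltaSp ℂ ρ (p ∘ ⇑ρ⁻¹) * ∏ s, A ((p ∘ ⇑ρ⁻¹) s) (j s)
      = ∏ r, (Jmat ℂ n (e p r).1 (e p r).2 *
          (A (e p r).1 (j (ρ (lo r))) * A (e p r).2 (j (ρ (hi r))))) := by
    intro p
    rw [← DeltaSp_mul, inv_mul_cancel, Finset.prod_mul_distrib]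
    congr 1
    rw [← Equiv.prod_comp ρ, ← Equiv.prod_comp (pairEquiv k), Fintype.prod_prod_type]
    refine Finset.prod_congr rfl fun r _ => ?_
    rw [Fintype.prod_bool, mul_comm]
    simp [e]
  rw [Finset.sum_congr rfl fun p _ => hterm p]
  rw [Equiv.sum_comp e fun x : Fin k → Fin (2 * n) × Fin (2 * n) =>
    ∏ r, (Jmat ℂ n (x r).1 (x r).2 * (A (x r).1 (j (ρ (lo r))) * A (x r).2 (j (ρ (hi r)))))]
  have h1 := Finset.prod_univ_sum
    (fun _ : Fin k => (univ : Finset (Fin (2 * n) × Fin (2 * n))))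
    (fun r x => Jmat ℂ n x.1 x.2 * (A x.1 (j (ρ (lo r))) * A x.2 (j (ρ (hi r)))))
  rw [Fintype.piFinset_univ] at h1
  rw [← h1]
  simp only [hJ]
  rfl

lemma invTensor_DeltaSp {n k : ℕ} (ρ : Equiv.Perm (Fin (2 * k))) :
    InvTensor (n := n) (DeltaSp ℂ ρ) := by
  intro g hg i
  have hA : ((g : Matrix (Fin (2 * n)) (Fin (2 * n)) ℂ)ᵀ)ᵀ * Jmat ℂ n
      * (g : Matrix (Fin (2 * n)) (Fin (2 * n)) ℂ)ᵀ = Jmat ℂ n := by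
    rw [Matrix.transpose_transpose]; exact hg
  rw [← sum_DeltaSp_mul_prod hA ρ i]
  refine Finset.sum_congr rfl fun p _ => ?_
  rw [mul_comm]
  rfl

/-! ### The Weingarten side -/

/-- The right-hand side of the Weingarten formula, as a tensor in the last argument `i`. -/
noncomputable def wgSum {n k : ℕ} (W : Equiv.Perm (Fin (2 * k)) → ℂ)
    (j i : Fin (2 * k) → Fin (2 * n)) : ℂ :=
  ∑ σ ∈ Mset k, ∑ τ ∈ Mset k, DeltaSp ℂ σ i * DeltaSp ℂ τ j * W (σ⁻¹ * τ)

lemma invTensor_wgSum {n k : ℕ} (W : Equiv.Perm (Fin (2 * k)) → ℂ)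
    (j : Fin (2 * k) → Fin (2 * n)) : InvTensor (wgSum W j) := by
  intro g hg i
  unfold wgSum
  simp only [Finset.mul_sum]
  rw [Finset.sum_comm]
  refine Finset.sum_congr rfl fun σ _ => ?_
  rw [Finset.sum_comm]
  refine Finset.sum_congr rfl fun τ _ => ?_
  rw [← invTensor_DeltaSp σ g hg i, Finset.sum_mul, Finset.sum_mul]
  refine Finset.sum_congr rfl fun p _ => ?_
  ring

/-- Only the representative of the coset `ρ H_k` contributes to the sum. -/
lemma sum_DeltaSp_mul_oneHeps {n k : ℕ} (ρ : Equiv.Perm (Fin (2 * k)))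
    (j : Fin (2 * k) → Fin (2 * n)) :
    ∑ τ ∈ Mset k, DeltaSp ℂ τ j * oneHeps (ρ⁻¹ * τ) = DeltaSp ℂ ρ j := by
  obtain ⟨m, hm, hmρ⟩ := exists_mem_Mset ρ
  have hρm : IsHyper (ρ⁻¹ * m) := by
    have := hmρ.inv
    rwa [_root_.mul_inv_rev, inv_inv] at this
  rw [Finset.sum_eq_single_of_mem m hm]
  · rw [oneHeps, if_pos hρm]
    have h1 := DeltaSp_mul_hyper ρ hρm j
    rw [mul_inv_cancel_left] at h1
    rw [h1]
    linear_combination DeltaSp ℂ ρ j * sgn_mul_self (ρ⁻¹ * m)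
  · intro τ hτ hne
    rw [oneHeps, if_neg, mul_zero]
    intro h
    refine hne (Mset_unique hm hτ ?_).symm
    have := hmρ.mul h
    rwa [mul_assoc, mul_inv_cancel_left] at this

/-- The defining relation of the Weingarten function, paired with `Δ'_ρ`. -/
lemma sum_DeltaSp_mul_wgSum {n k : ℕ} {W : Equiv.Perm (Fin (2 * k)) → ℂ}
    (hbi : ∀ (σ ζ ζ' : Equiv.Perm (Fin (2 * k))), IsHyper ζ → IsHyper ζ' →
      W (ζ * σ * ζ') = sgn ℂ ζ * sgn ℂ ζ' * W σ)
    (hWg : sconv (fun σ => (-1 : ℂ) ^ k * sgn ℂ σ * (-(2 * (n : ℂ))) ^ ccount σ) W = oneHeps)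
    (ρ : Equiv.Perm (Fin (2 * k))) (j : Fin (2 * k) → Fin (2 * n)) :
    ∑ i, DeltaSp ℂ ρ i * wgSum W j i = DeltaSp ℂ ρ j := by
  have key : ∀ τ, ∑ σ ∈ Mset k, (∑ i : Fin (2 * k) → Fin (2 * n),
      DeltaSp ℂ ρ i * DeltaSp ℂ σ i) * W (σ⁻¹ * τ) = oneHeps (ρ⁻¹ * τ) := by
    intro τ
    rw [← hWg, sconv, ← sum_Mset_translate _ _ ρ]
    · refine Finset.sum_congr rfl fun σ _ => ?_
      rw [gram, inv_mul_cancel_left, _root_.mul_inv_rev, mul_assoc σ⁻¹]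
    · intro σ ζ hζ
      have h1 : (σ * ζ)⁻¹ * τ = ζ⁻¹ * (σ⁻¹ * τ) * 1 := by group
      have h2 : sgn ℂ (1 : Equiv.Perm (Fin (2 * k))) = 1 := by simp [sgn]
      rw [h1, hbi _ _ _ hζ.inv isHyper_one, sgn_inv, h2]
      simp only [DeltaSp_mul_hyper σ hζ, mul_left_comm _ (sgn ℂ ζ)]
      rw [← Finset.mul_sum]
      linear_combination ((∑ i : Fin (2 * k) → Fin (2 * n),
        DeltaSp ℂ ρ i * DeltaSp ℂ σ i) * W (σ⁻¹ * τ)) * sgn_mul_self ζ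
  rw [← sum_DeltaSp_mul_oneHeps ρ j]
  simp only [← key, wgSum, Finset.mul_sum, Finset.sum_mul]
  rw [Finset.sum_comm, Finset.sum_comm (s := Mset k) (t := Mset k)]
  refine Finset.sum_congr rfl fun σ _ => ?_
  rw [Finset.sum_comm]
  refine Finset.sum_congr rfl fun τ _ => Finset.sum_congr rfl fun i _ => ?_
  ring

/-! ### Moments of an invariant measure -/

instance (n : ℕ) : BorelSpace (UG n) := ⟨rfl⟩

lemma continuous_entry {n : ℕ} (a b : Fin n) :
    Continuous fun S : UG n => (S : Matrix (Fin n) (Fin n) ℂ) a b :=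
  (continuous_apply b).comp ((continuous_apply a).comp continuous_subtype_val)

lemma integrable_prod_entry {n N : ℕ} (μ : Measure (UG n)) [IsProbabilityMeasure μ]
    (i j : Fin N → Fin n) :
    Integrable (fun S : UG n => ∏ s, (S : Matrix (Fin n) (Fin n) ℂ) (i s) (j s)) μ := by
  refine Integrable.of_bound (C := 1)
    (continuous_finsetProd _ fun s _ => continuous_entry (i s) (j s)).aestronglyMeasurable
    (Filter.Eventually.of_forall fun S => ?_)
  rw [norm_prod]
  exact Finset.prod_le_one (fun _ _ => norm_nonneg _)
    fun s _ => entry_norm_bound_of_unitary S.2 (i s) (j s)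

/-- Invariance of the moments under left translation by `g`. -/
lemma integral_comp_mul {n N : ℕ} {μ : Measure (UG n)} {g : UG n}
    (hg : μ.map (fun x => g * x) = μ) (i j : Fin N → Fin n) :
    ∫ S : UG n, ∏ s, ((g * S : UG n) : Matrix (Fin n) (Fin n) ℂ) (i s) (j s) ∂μ
      = ∫ S : UG n, ∏ s, (S : Matrix (Fin n) (Fin n) ℂ) (i s) (j s) ∂μ := by
  conv_rhs => rw [← hg]
  rw [integral_map (continuous_const_mul g).measurable.aemeasurable]
  exact (continuous_finsetProd _ fun s _ => continuous_entry (i s) (j s)).aestronglyMeasurable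

lemma ae_isSymplectic {n : ℕ} {μ : Measure (UG (2 * n))} [IsProbabilityMeasure μ]
    (h : μ {S : UG (2 * n) | IsSymplectic S} = 1) : ∀ᵐ S ∂μ, IsSymplectic S := by
  have hc : IsClosed {S : UG (2 * n) | IsSymplectic S} := by
    unfold IsSymplectic
    refine isClosed_eq ?_ continuous_const
    exact (continuous_subtype_val.matrix_mul continuous_const).matrix_mul
      continuous_subtype_val.matrix_transpose
  exact (prob_compl_eq_zero_iff hc.measurableSet).2 h

lemma invTensor_moment {n N : ℕ} {μ : Measure (UG (2 * n))} [IsProbabilityMeasure μ]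
    (hμ : ∀ g : UG (2 * n), IsSymplectic g → μ.map (fun x => g * x) = μ)
    (j : Fin N → Fin (2 * n)) :
    InvTensor fun i : Fin N → Fin (2 * n) => ∫ S : UG (2 * n), ∏ s,
      (S : Matrix (Fin (2 * n)) (Fin (2 * n)) ℂ) (i s) (j s) ∂μ := by
  intro g hg i
  simp only
  rw [← integral_comp_mul (hμ g hg) i j]
  simp only [← integral_const_mul]
  rw [← integral_finsetSum _ fun p _ => (integrable_prod_entry μ p j).const_mul _]
  refine integral_congr_ae (Filter.Eventually.of_forall fun S => ?_)
  simp only [Submonoid.coe_mul, Matrix.mul_apply]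
  rw [Finset.prod_univ_sum, Fintype.piFinset_univ]
  refine Finset.sum_congr rfl fun p _ => ?_
  rw [Finset.prod_mul_distrib]

/-- The relation `Sᵀ J S = J` makes the contraction of the moments with `Δ'_ρ` deterministic. -/
lemma sum_DeltaSp_mul_moment {n k : ℕ} {μ : Measure (UG (2 * n))} [IsProbabilityMeasure μ]
    (hsupp : μ {S : UG (2 * n) | IsSymplectic S} = 1)
    (ρ : Equiv.Perm (Fin (2 * k))) (j : Fin (2 * k) → Fin (2 * n)) :
    ∑ i, DeltaSp ℂ ρ i * ∫ S : UG (2 * n), ∏ s,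
      (S : Matrix (Fin (2 * n)) (Fin (2 * n)) ℂ) (i s) (j s) ∂μ = DeltaSp ℂ ρ j := by
  simp only [← integral_const_mul]
  rw [← integral_finsetSum _ fun p _ => (integrable_prod_entry μ p j).const_mul _]
  have h : ∀ᵐ S : UG (2 * n) ∂μ, ∑ i, DeltaSp ℂ ρ i * ∏ s,
      (S : Matrix (Fin (2 * n)) (Fin (2 * n)) ℂ) (i s) (j s) = DeltaSp ℂ ρ j := by
    filter_upwards [ae_isSymplectic hsupp] with S hS
    exact sum_DeltaSp_mul_prod hS.transpose_mul ρ j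
  rw [integral_congr_ae h]
  simp

lemma InvTensor.sub {n N : ℕ} {T U : (Fin N → Fin (2 * n)) → ℂ} (hT : InvTensor T)
    (hU : InvTensor U) : InvTensor fun i => T i - U i := by
  intro g hg i
  simp only [mul_sub, Finset.sum_sub_distrib]
  rw [hT g hg, hU g hg]

/-- Odd moments vanish because `-1` is symplectic. -/
lemma odd_moment {n k : ℕ} {μ : Measure (UG (2 * n))}
    (hμ : ∀ g : UG (2 * n), IsSymplectic g → μ.map (fun x => g * x) = μ)
    (i j : Fin (2 * k + 1) → Fin (2 * n)) :
    ∫ S : UG (2 * n), ∏ s, (S : Matrix (Fin (2 * n)) (Fin (2 * n)) ℂ) (i s) (j s) ∂μ = 0 := by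
  let g : UG (2 * n) := ⟨-1, by
    rw [Matrix.mem_unitaryGroup_iff]; simp⟩
  have hg : IsSymplectic g := by
    simp [IsSymplectic, g]
  have h := integral_comp_mul (hμ g hg) i j
  have h2 : ∀ S : UG (2 * n),
      ∏ s, ((g * S : UG (2 * n)) : Matrix (Fin (2 * n)) (Fin (2 * n)) ℂ) (i s) (j s)
      = -∏ s, (S : Matrix (Fin (2 * n)) (Fin (2 * n)) ℂ) (i s) (j s) := by
    intro S
    have h3 : ∀ a b, ((g * S : UG (2 * n)) : Matrix (Fin (2 * n)) (Fin (2 * n)) ℂ) a b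
        = -(S : Matrix (Fin (2 * n)) (Fin (2 * n)) ℂ) a b := by
      intro a b
      simp [g]
    simp only [h3]
    rw [Finset.prod_neg, Finset.card_univ, Fintype.card_fin, pow_succ, pow_mul]
    simp
  simp only [h2, integral_neg] at h
  exact self_eq_neg.1 h.symm

/-- Weingarten calculus for compact symplectic groups, Theorem 2.4. -/
theorem stmt5 (n k : ℕ) (hk : 0 < k) (hnk : k ≤ n)
    (μ : Measure (UG (2 * n))) [IsProbabilityMeasure μ]
    (hsupp : μ {S : UG (2 * n) | IsSymplectic S} = 1)
    (hμ : ∀ g : UG (2 * n), IsSymplectic g → μ.map (fun x => g * x) = μ)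
    (WgSp : Equiv.Perm (Fin (2 * k)) → ℂ)
    (hbi : ∀ (σ ζ ζ' : Equiv.Perm (Fin (2 * k))), IsHyper ζ → IsHyper ζ' →
      WgSp (ζ * σ * ζ') = sgn ℂ ζ * sgn ℂ ζ' * WgSp σ)
    (hWg : sconv (fun σ => (-1 : ℂ) ^ k * sgn ℂ σ * (-(2 * (n : ℂ))) ^ ccount σ) WgSp
      = oneHeps)
    (i j : Fin (2 * k) → Fin (2 * n))
    (m k' : ℕ) (hm : 1 ≤ m)
    (ν : Measure (UG (2 * m))) [IsProbabilityMeasure ν]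
    (hνsupp : ν {S : UG (2 * m) | IsSymplectic S} = 1)
    (hν : ∀ g : UG (2 * m), IsSymplectic g → ν.map (fun x => g * x) = ν) :
    (∫ S : UG (2 * n), ∏ s : Fin (2 * k),
        (S : Matrix (Fin (2 * n)) (Fin (2 * n)) ℂ) (i s) (j s) ∂μ
      = ∑ σ ∈ Mset k, ∑ τ ∈ Mset k, DeltaSp ℂ σ i * DeltaSp ℂ τ j * WgSp (σ⁻¹ * τ)) ∧
    ∀ i' j' : Fin (2 * k' + 1) → Fin (2 * m),
      ∫ S : UG (2 * m), ∏ s : Fin (2 * k' + 1),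
        (S : Matrix (Fin (2 * m)) (Fin (2 * m)) ℂ) (i' s) (j' s) ∂ν = 0 := by
  refine ⟨?_, odd_moment hν⟩
  -- moment and Weingarten sum are invariant tensors with the same pairings, hence equal
  refine sub_eq_zero.1 (InvTensor.eq_zero_of_contrZero k hnk _
    ((invTensor_moment hμ j).sub (invTensor_wgSum WgSp j))
    (contrZero_of_orthogonal k _ fun ρ => ?_) i)
  simp only [mul_sub, Finset.sum_sub_distrib]
  rw [sum_DeltaSp_mul_moment hsupp, sum_DeltaSp_mul_wgSum hbi hWg, sub_self]

end WgPaper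
end

section
/- Let n, k be positive integers with n ≥ 2k, let U be a Haar-distributed random matrix from U(n), and let V = (v_{ij}) = UᵀU (the circular orthogonal ensemble matrix). For any sequences i = (i_1,…,i_{2k}) and j = (j_1,…,j_{2k}) in {1,…,n}, E[ v_{i_1 i_2} v_{i_3 i_4} ⋯ v_{i_{2k−1} i_{2k}} · conj(v_{j_1 j_2} v_{j_3 j_4} ⋯ v_{j_{2k−1} j_{2k}}) ] = Σ_{σ ∈ S_{2k}} δ_σ(i,j) Wg^{AI}(σ; n), where Wg^{AI}(·; n) := T^O(·; n) * Wg^U(·; n). Moreover, for any n ≥ 1, if k ≠ l then E[ v_{i_1 i_2} ⋯ v_{i_{2k−1} i_{2k}} · conj(v_{j_1 j_2} ⋯ v_{j_{2l−1} j_{2l}}) ] = 0 for all index sequences. -/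
/-!
The proof derives the unitary Weingarten formula and then sums it over row indices.

For fixed column indices `i, j` the moment `T(a, b) = E[∏ u_{a_s i_s} conj u_{b_s j_s}]` is, as a
tensor in the row indices, invariant under `U(n)` by left invariance of the measure. Three
consequences are used: the torus forces `a` and `b` to have the same values with multiplicity
(`moment_weight`), permutation matrices give symmetry under relabelling values (`moment_perm`), and
plane rotations give a linear relation upon differentiation (`moment_lie`). In the range `q ≤ n`
these already imply that `T(a, b) = ∑_σ c_σ [a ∘ σ = b]` (`invariant_eq_sum_perm`). Contracting with
a permutation `τ` and using `U* U = 1` gives `c * n ^ cyc = δ_•(i, j)`, so that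
`c = δ_•(i, j) * Wg^U` (`umoment_formula`).

A product of entries of `Uᵀ U` is a sum of products of entries of `U` over row indices that are
constant on the blocks `{2r, 2r+1}`. The number of pairs of such `a, b` with `a ∘ σ = b` is
`n ^ c(σ)` (`card_pairs`), and `Wg^U(σ⁻¹) = Wg^U(σ)` (`weingarten_inv`) puts the sum in the stated
form. When the degrees differ, every unitary moment vanishes by the weight condition.
-/

/-!
Weingarten calculus for classical compact Lie groups and compact symmetric spaces
(S. Matsumoto, "Weingarten calculus for matrix ensembles associated with compact
symmetric spaces"): common definitions.

We index `{1,…,m}` by `Fin m` (0-indexed), so the pair `{2r-1, 2r}` becomes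
`{2r, 2r+1}` for `r ∈ Fin k`.
-/

open MeasureTheory Finset Matrix

namespace WgPaper

/-! ### Invariant tensors are combinations of permutations -/

open Function in
/-- Here `hW` is invariance under the diagonal torus and `hL` is invariance under the infinitesimal
rotation in the plane of `x` and `y`. Applied to `a` and to `b` with one `x` replaced by the unused
value `y`, the latter expresses `T a b` through row sequences in which one `x` has become `y`; the
terms in which `b` receives a second `y` vanish by weight. -/
lemma invariant_step {q n : ℕ} (T : (Fin q → Fin n) → (Fin q → Fin n) → ℂ)
    (hW : ∀ a b, T a b ≠ 0 → ∀ x, #{s | a s = x} = #{s | b s = x})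
    (hL : ∀ a b x y, x ≠ y →
      ∑ s, ((if a s = y then T (update a s x) b else 0) -
          (if a s = x then T (update a s y) b else 0)) +
        ∑ s, ((if b s = y then T a (update b s x) else 0) -
          (if b s = x then T a (update b s y) else 0)) = 0)
    (a b : Fin q → Fin n) (x y : Fin n) (ha : ∀ s, a s ≠ y) (hb : ∀ s, b s ≠ y)
    (s₀ : Fin q) (hs₀ : b s₀ = x) :
    T a b = ∑ s, if a s = x then T (update a s y) (update b s₀ y) else 0 := by
  have hxy : x ≠ y := fun h => hb s₀ (hs₀.trans h)
  have key := hL a (update b s₀ y) x y hxy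
  have h1 : ∀ s, (if update b s₀ y s = y then T a (update (update b s₀ y) s x) else 0) =
      if s = s₀ then T a b else 0 := by
    intro s
    by_cases h : s = s₀
    · subst h
      simp [← hs₀]
    · simp [h, hb s]
  have h2 : ∀ s, T a (update (update b s₀ y) s y) = 0 := by
    intro s
    by_contra h
    have := hW _ _ h y
    rw [Finset.filter_false_of_mem (by simpa using ha), Finset.card_empty] at this
    have h3 : s ∈ ({t | update (update b s₀ y) s y t = y} : Finset (Fin q)) := by simp
    rw [Finset.card_eq_zero.mp this.symm] at h3
    simp at h3
  simp only [h1, h2, ha, if_false, ite_self, sub_zero, zero_sub, Finset.sum_neg_distrib,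
    Finset.sum_ite_eq', Finset.mem_univ, if_true] at key
  linear_combination key

open Function in
/-- The permutation tensor `[a ∘ σ = b]` satisfies the recursion of `invariant_step`; only the
term `s = σ s₀` contributes. -/
lemma delta_step {q n : ℕ} (σ : Equiv.Perm (Fin q)) (z : ℂ)
    (a b : Fin q → Fin n) (x y : Fin n) (ha : ∀ s, a s ≠ y)
    (s₀ : Fin q) (hs₀ : b s₀ = x) :
    (if a ∘ σ = b then z else 0) =
      ∑ s, if a s = x then (if update a s y ∘ σ = update b s₀ y then z else 0) else 0 := by
  have h : ∀ s, (if a s = x then (if update a s y ∘ σ = update b s₀ y then z else 0) else 0) =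
      if s = σ s₀ then (if a ∘ σ = b then z else 0) else 0 := by
    intro s
    by_cases hs : s = σ s₀
    · subst hs
      have : (a (σ s₀) = x ∧ update a (σ s₀) y ∘ σ = update b s₀ y) ↔ a ∘ σ = b := by
        constructor
        · rintro ⟨h1, h2⟩
          funext t
          by_cases ht : t = s₀
          · subst ht; simp [h1, hs₀]
          · simpa [ht] using congrFun h2 t
        · rintro rfl
          refine ⟨hs₀, ?_⟩
          funext t
          by_cases ht : t = s₀
          · subst ht; simp
          · simp [ht]
      rw [← ite_and]
      simp only [this, if_true]
    · have : ¬ update a s y ∘ σ = update b s₀ y := by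
        intro h2
        have := congrFun h2 s₀
        simp [Ne.symm hs, ha] at this
      simp [hs, this]
  simp only [h, Finset.sum_ite_eq', Finset.mem_univ, if_true]

lemma exists_perm_of_card_eq {q n : ℕ} (a b : Fin q → Fin n)
    (h : ∀ x, #{s | a s = x} = #{s | b s = x}) : ∃ σ : Equiv.Perm (Fin q), a ∘ σ = b := by
  have e : ∀ x, Nonempty ({s // b s = x} ≃ {s // a s = x}) := by
    intro x
    rw [← Fintype.card_eq, Fintype.card_subtype, Fintype.card_subtype, h x]
  exact ⟨Equiv.ofFiberEquiv fun x => (e x).some, funext fun s => Equiv.ofFiberEquiv_map _ s⟩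

lemma card_eq_of_perm {q n : ℕ} (a : Fin q → Fin n) (σ : Equiv.Perm (Fin q)) (x : Fin n) :
    #{s | a s = x} = #{s | (a ∘ σ) s = x} := by
  rw [← Fintype.card_subtype, ← Fintype.card_subtype]
  exact (Fintype.card_congr (σ.subtypeEquiv fun s => by simp)).symm

open Function in
/-- First fundamental theorem for the unitary group in the stable range `q ≤ n`: an invariant tensor
is a combination of permutations. The coefficients are read off at an injective sequence `a₀`. Both
sides agree at every injective `a` by permutation invariance, and both satisfy the recursion of
`invariant_step`, which increases the number of distinct values of `a`. -/
theorem invariant_eq_sum_perm {q n : ℕ} (hq : q ≤ n)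
    (T : (Fin q → Fin n) → (Fin q → Fin n) → ℂ)
    (hW : ∀ a b, T a b ≠ 0 → ∀ x, #{s | a s = x} = #{s | b s = x})
    (hP : ∀ (π : Equiv.Perm (Fin n)) a b, T (π ∘ a) (π ∘ b) = T a b)
    (hL : ∀ a b x y, x ≠ y →
      ∑ s, ((if a s = y then T (update a s x) b else 0) -
          (if a s = x then T (update a s y) b else 0)) +
        ∑ s, ((if b s = y then T a (update b s x) else 0) -
          (if b s = x then T a (update b s y) else 0)) = 0) :
    ∃ c : Equiv.Perm (Fin q) → ℂ, ∀ a b, T a b = ∑ σ : Equiv.Perm (Fin q), if a ∘ σ = b then c σ else 0 := by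
  set a₀ : Fin q → Fin n := Fin.castLE hq with ha₀
  refine ⟨fun σ => T a₀ (a₀ ∘ σ), fun a b => ?_⟩
  induction hd : n - #(univ.image a) using Nat.strong_induction_on generalizing a b with
  | _ d ih =>
  by_cases hab : ∀ x, #{s | a s = x} = #{s | b s = x}
  swap
  · have h0 : T a b = 0 := by
      by_contra h
      exact hab (hW a b h)
    rw [h0, Finset.sum_eq_zero]
    intro σ _
    rw [if_neg]
    rintro rfl
    exact hab (card_eq_of_perm a σ)
  obtain ⟨σ, rfl⟩ := exists_perm_of_card_eq a b hab
  by_cases hinj : Injective a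
  · obtain ⟨π, hπ⟩ := Equiv.Perm.exists_extending_pair a₀ a (Fin.castLE_injective hq) hinj
    have hπ' : a = π ∘ a₀ := funext fun s => (hπ s).symm
    rw [Finset.sum_eq_single σ]
    · rw [if_pos rfl]
      conv_lhs => rw [hπ', Function.comp_assoc, hP]
    · intro τ _ hτ
      rw [if_neg]
      intro h
      exact hτ (Equiv.ext fun s => hinj (congrFun h s))
    · simp
  · obtain ⟨t₁, t₂, ht, hne⟩ := Function.not_injective_iff.mp hinj
    -- `a` has fewer than `q ≤ n` distinct values, so some value `y` is unused
    have hlt : #(univ.image a) < q := by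
      refine lt_of_le_of_ne (Finset.card_image_le.trans (by simp)) fun h => hinj ?_
      rw [← Set.injOn_univ, ← Finset.coe_univ, ← Finset.card_image_iff, h, Finset.card_fin]
    obtain ⟨y, hy⟩ : ∃ y, y ∉ univ.image a := by
      by_contra! h
      rw [Finset.eq_univ_of_forall h] at hlt
      simp at hlt; omega
    have ha : ∀ s, a s ≠ y := by simpa using hy
    have hs₀ : (a ∘ σ) (σ.symm t₁) = a t₁ := by simp
    rw [invariant_step T hW hL a (a ∘ σ) (a t₁) y ha (fun s => ha _) _ hs₀]
    simp_rw [delta_step _ _ a (a ∘ σ) (a t₁) y ha _ hs₀]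
    rw [Finset.sum_comm]
    refine Finset.sum_congr rfl fun s _ => ?_
    by_cases hs : a s = a t₁
    · simp only [hs, if_true]
      refine ih _ ?_ _ _ rfl
      have hsub : insert y (univ.image a) ⊆ univ.image (update a s y) := by
        intro z hz
        rw [Finset.mem_insert, Finset.mem_image] at hz
        rw [Finset.mem_image]
        rcases hz with rfl | ⟨t, -, rfl⟩
        · exact ⟨s, by simp, by simp⟩
        · by_cases hts : t = s
          · subst hts
            by_cases h1 : t = t₁
            · exact ⟨t₂, by simp, by rw [update_of_ne (by rintro rfl; exact hne h1.symm), hs, ht]⟩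
            · exact ⟨t₁, by simp, by rw [update_of_ne (Ne.symm h1), hs]⟩
          · exact ⟨t, by simp, by rw [update_of_ne hts]⟩
      have := Finset.card_le_card hsub
      rw [Finset.card_insert_of_notMem hy] at this
      omega
    · simp [hs]

/-! ### Counting index sequences -/

/-- The map `x ↦ π.cycleOf x` on moved points, and the identity on fixed points, identifies the classes
of `SameCycle` with the cycles counted by `cyc`. -/
lemma card_quotient_sameCycle {m : ℕ} (π : Equiv.Perm (Fin m)) :
    Nat.card (Quotient (Equiv.Perm.SameCycle.setoid π)) = cyc π := by
  classical
  let f : Fin m → {c // c ∈ π.cycleFactorsFinset} ⊕ {x // π x = x} := fun x =>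
    if h : π x = x then Sum.inr ⟨x, h⟩ else
      Sum.inl ⟨π.cycleOf x, by
        rw [Equiv.Perm.cycleOf_mem_cycleFactorsFinset_iff, Equiv.Perm.mem_support]; exact h⟩
  have hf : ∀ x y, f x = f y ↔ π.SameCycle x y := by
    intro x y
    by_cases hx : π x = x
    · by_cases hy : π y = y
      · simp only [f, hx, hy, dif_pos, Sum.inr.injEq, Subtype.mk.injEq]
        exact ⟨fun h => h ▸ Equiv.Perm.SameCycle.refl _ _, fun h => h.eq_of_left hx⟩
      · simp only [f, hx, hy, dif_pos, dif_neg, not_false_eq_true, reduceCtorEq, false_iff]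
        exact fun h => hy (h.apply_eq_self_iff.mp hx)
    · by_cases hy : π y = y
      · simp only [f, hx, hy, dif_pos, dif_neg, not_false_eq_true, reduceCtorEq, false_iff]
        exact fun h => hx (h.apply_eq_self_iff.mpr hy)
      · simp only [f, hx, hy, dif_neg, not_false_eq_true, Sum.inl.injEq, Subtype.mk.injEq]
        rw [Equiv.Perm.sameCycle_iff_cycleOf_eq_of_mem_support] <;> simpa
  have hsurj : Function.Surjective f := by
    rintro (⟨c, hc⟩ | ⟨x, hx⟩)
    · obtain ⟨x, hx⟩ := (Equiv.Perm.mem_cycleFactorsFinset_iff.mp hc).1.nonempty_support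
      have hxc : c = π.cycleOf x := Equiv.Perm.cycle_is_cycleOf hx hc
      have hx' : ¬ π x = x := by
        have := Equiv.Perm.mem_cycleFactorsFinset_support_le hc hx
        simpa using this
      exact ⟨x, by simp [f, hx', hxc]⟩
    · exact ⟨x, by simp [f, hx]⟩
  let F : Quotient (Equiv.Perm.SameCycle.setoid π) →
      {c // c ∈ π.cycleFactorsFinset} ⊕ {x // π x = x} :=
    Quotient.lift f fun x y h => (hf x y).mpr h
  have hF : Function.Bijective F := by
    constructor
    · intro u v
      induction u using Quotient.inductionOn
      induction v using Quotient.inductionOn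
      intro h
      exact Quotient.sound ((hf _ _).mp h)
    · intro z
      obtain ⟨x, hx⟩ := hsurj z
      exact ⟨Quotient.mk _ x, hx⟩
  rw [Nat.card_congr (Equiv.ofBijective F hF), Nat.card_sum, cyc, Equiv.Perm.cycleType_def]
  simp [Fintype.card_subtype]

lemma card_comp_perm_eq {m n : ℕ} (π : Equiv.Perm (Fin m)) :
    #{a : Fin m → Fin n | a ∘ π = a} = n ^ cyc π := by
  classical
  rw [← card_quotient_sameCycle, ← Fintype.card_subtype, ← Nat.card_eq_fintype_card]
  have e : {a : Fin m → Fin n // a ∘ π = a} ≃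
      {a : Fin m → Fin n // Equiv.Perm.SameCycle.setoid π ≤ Setoid.ker a} := by
    refine Equiv.subtypeEquivRight fun a => ⟨fun h x y hxy => ?_, fun h => ?_⟩
    · obtain ⟨i, rfl⟩ := hxy
      have hz : ∀ i : ℤ, a ∘ (π ^ i : Equiv.Perm (Fin m)) = a := by
        intro i
        induction i using Int.induction_on with
        | zero => rfl
        | succ i ih => rw [_root_.zpow_add_one, Equiv.Perm.coe_mul, ← Function.comp_assoc, ih, h]
        | pred i ih =>
          rw [_root_.zpow_sub_one, Equiv.Perm.coe_mul, ← Function.comp_assoc, ih]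
          conv_lhs => rw [← h]
          funext x; simp
      exact (congrFun (hz i) x).symm
    · funext x
      exact (h (show π.SameCycle x (π x) from ⟨1, by simp⟩)).symm
  rw [Nat.card_congr (e.trans (Setoid.liftEquiv _)), Nat.card_fun]
  simp

lemma cyc_conj {m : ℕ} (σ τ : Equiv.Perm (Fin m)) : cyc (τ * σ * τ⁻¹) = cyc σ := by
  rw [cyc, cyc, Equiv.Perm.cycleType_conj]
  congr 1
  rw [← Fintype.card_subtype, ← Fintype.card_subtype]
  refine Fintype.card_congr (τ.symm.subtypeEquiv fun x => ?_)
  simp [Equiv.eq_symm_apply]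

lemma cyc_inv {m : ℕ} (σ : Equiv.Perm (Fin m)) : cyc σ⁻¹ = cyc σ := by
  rw [cyc, cyc, Equiv.Perm.cycleType_inv]
  congr 2
  ext x
  rw [Finset.mem_filter, Finset.mem_filter, Equiv.Perm.inv_eq_iff_eq, eq_comm]

lemma card_comp_eq_comp {m n : ℕ} (σ τ : Equiv.Perm (Fin m)) :
    #{a : Fin m → Fin n | a ∘ σ = a ∘ τ} = n ^ cyc (σ⁻¹ * τ) := by
  rw [← cyc_conj _ σ, ← card_comp_perm_eq]
  congr 1
  ext a
  simp only [Finset.mem_filter, Finset.mem_univ, true_and]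
  constructor
  · intro h
    funext x
    have := congrFun h (σ⁻¹ x)
    simpa using this.symm
  · intro h
    funext x
    have := congrFun h (σ x)
    simpa using this.symm

/-- The block `{2r, 2r+1}` containing a point. -/
def half {k : ℕ} (t : Fin (2 * k)) : Fin k := ⟨t / 2, by have := t.isLt; omega⟩

@[simp] lemma half_lo {k : ℕ} (r : Fin k) : half (lo r) = r := by ext; simp [half, lo]
@[simp] lemma half_hi {k : ℕ} (r : Fin k) : half (hi r) = r := by ext; simp [half, hi]; omega

lemma eq_lo_or_hi {k : ℕ} (t : Fin (2 * k)) : t = lo (half t) ∨ t = hi (half t) := by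
  rcases Nat.mod_two_eq_zero_or_one t with h | h
  · left; ext; simp [half, lo]; omega
  · right; ext; simp [half, hi]; omega

/-- A pair `(p, p')` with `(p ∘ half) ∘ σ = p' ∘ half` amounts to a function on the vertices that is
constant along the edges of `Γ(σ)`, that is, to a function on its connected components. -/
lemma card_pairs {k n : ℕ} (σ : Equiv.Perm (Fin (2 * k))) :
    #{p : (Fin k → Fin n) × (Fin k → Fin n) | (p.1 ∘ half) ∘ σ = p.2 ∘ half} =
      n ^ ccount σ := by
  classical
  rw [ccount, ← Fintype.card_subtype]
  have : n ^ Nat.card (Gamma σ).ConnectedComponent =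
      Fintype.card ((Gamma σ).ConnectedComponent → Fin n) := by
    simp
  rw [this]
  have hadj : ∀ (f g : Fin k → Fin n), (f ∘ half) ∘ σ = g ∘ half →
      ∀ v w, (Gamma σ).Adj v w → (f ∘ half) v = (f ∘ half) w := by
    intro f g h v w hvw
    have hr : ∀ v w, ((∃ r : Fin k, v = lo r ∧ w = hi r) ∨
        ∃ r : Fin k, v = σ (lo r) ∧ w = σ (hi r)) → (f ∘ half) v = (f ∘ half) w := by
      rintro v w (⟨r, rfl, rfl⟩ | ⟨r, rfl, rfl⟩)
      · simp
      · have h1 := congrFun h (lo r)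
        have h2 := congrFun h (hi r)
        simp only [Function.comp_apply, half_lo, half_hi] at h1 h2 ⊢
        rw [h1, h2]
    rw [Gamma, SimpleGraph.fromRel_adj] at hvw
    rcases hvw.2 with h | h
    · exact hr v w h
    · exact (hr w v h).symm
  have hlohi : ∀ r : Fin k, lo r ≠ hi r := by
    intro r h
    simp [lo, hi, Fin.ext_iff] at h
  have hwalk : ∀ (f g : Fin k → Fin n), (f ∘ half) ∘ σ = g ∘ half →
      ∀ v w, (Gamma σ).Reachable v w → (f ∘ half) v = (f ∘ half) w := by
    rintro f g h v w ⟨p⟩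
    induction p with
    | nil => rfl
    | cons h' _ ih => exact (hadj f g h _ _ h').trans ih
  refine Fintype.card_congr ⟨fun p C => C.lift (p.1.1 ∘ half)
      (fun v w q _ => hwalk p.1.1 p.1.2 p.2 v w ⟨q⟩),
    fun F => ⟨(fun r => F ((Gamma σ).connectedComponentMk (lo r)),
      fun r => F ((Gamma σ).connectedComponentMk (σ (lo r)))), ?_⟩, ?_, ?_⟩
  · have hA : ∀ v, F ((Gamma σ).connectedComponentMk (lo (half v))) =
        F ((Gamma σ).connectedComponentMk v) := by
      intro v
      rcases eq_lo_or_hi v with h | h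
      · rw [← h]
      · congr 1
        rw [SimpleGraph.ConnectedComponent.eq]
        refine SimpleGraph.Adj.reachable ?_
        rw [Gamma, SimpleGraph.fromRel_adj]
        exact ⟨by rw [h, half_hi]; exact hlohi _, Or.inl (Or.inl ⟨half v, rfl, h⟩)⟩
    have hB : ∀ v, F ((Gamma σ).connectedComponentMk (σ (lo (half v)))) =
        F ((Gamma σ).connectedComponentMk (σ v)) := by
      intro v
      rcases eq_lo_or_hi v with h | h
      · rw [← h]
      · congr 1
        rw [SimpleGraph.ConnectedComponent.eq]
        refine SimpleGraph.Adj.reachable ?_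
        rw [Gamma, SimpleGraph.fromRel_adj]
        exact ⟨by rw [h, half_hi]; exact fun h' => hlohi _ (σ.injective h'),
          Or.inl (Or.inr ⟨half v, rfl, congrArg σ h⟩)⟩
    funext v
    simp only [Function.comp_apply, hA, hB]
  · rintro ⟨⟨f, g⟩, h⟩
    ext r
    · simp
    · have := congrFun h (lo r)
      simp only [Function.comp_apply, half_lo] at this
      simp [this]
  · intro F
    funext C
    induction C using SimpleGraph.ConnectedComponent.ind with
    | _ v =>
    simp only [SimpleGraph.ConnectedComponent.lift_mk, Function.comp_apply]
    rcases eq_lo_or_hi v with h | h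
    · rw [← h]
    · congr 1
      rw [SimpleGraph.ConnectedComponent.eq]
      refine SimpleGraph.Adj.reachable ?_
      rw [Gamma, SimpleGraph.fromRel_adj]
      exact ⟨by rw [h, half_hi]; exact hlohi _, Or.inl (Or.inl ⟨half v, rfl, h⟩)⟩

/-- The identity of `ℂ` (for `false`) or complex conjugation (for `true`). -/
noncomputable def cj (b : Bool) : ℂ →+* ℂ := if b then starRingEnd ℂ else RingHom.id ℂ

@[simp] lemma cj_false (z : ℂ) : cj false z = z := rfl

@[simp] lemma cj_true (z : ℂ) : cj true z = star z := rfl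

lemma norm_cj (b : Bool) (z : ℂ) : ‖cj b z‖ = ‖z‖ := by cases b <;> simp

lemma continuous_cj (b : Bool) : Continuous (cj b) := by
  cases b
  · exact continuous_id
  · exact continuous_star

lemma cj_ofReal (b : Bool) (r : ℝ) : cj b (r : ℂ) = r := by cases b <;> simp

/-- The mixed moment `E[∏ₛ u_{e(s) c(s)}]`, in which the factor at `s` is conjugated
if `ε s = true`. -/
noncomputable def moment {n : ℕ} {ι : Type} [Fintype ι] (μ : Measure (UG n)) (ε : ι → Bool)
    (c e : ι → Fin n) : ℂ :=
  ∫ U : UG n, ∏ s, cj (ε s) ((U : Matrix (Fin n) (Fin n) ℂ) (e s) (c s)) ∂μ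

section Moment

variable {n : ℕ} {ι : Type} [Fintype ι] (μ : Measure (UG n))

lemma continuous_entry_prod (ε : ι → Bool) (c e : ι → Fin n) :
    Continuous fun U : UG n => ∏ s, cj (ε s) ((U : Matrix (Fin n) (Fin n) ℂ) (e s) (c s)) :=
  continuous_finsetProd _ fun s _ => (continuous_cj _).comp
    (continuous_subtype_val.matrix_elem (e s) (c s))

lemma integrable_entry_prod [IsProbabilityMeasure μ] (ε : ι → Bool) (c e : ι → Fin n) :
    Integrable (fun U : UG n =>
      ∏ s, cj (ε s) ((U : Matrix (Fin n) (Fin n) ℂ) (e s) (c s))) μ := by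
  refine Integrable.of_bound (continuous_entry_prod ε c e).measurable.aestronglyMeasurable 1
    (Filter.Eventually.of_forall fun U => ?_)
  rw [norm_prod]
  refine Finset.prod_le_one (fun _ _ => norm_nonneg _) fun s _ => ?_
  rw [norm_cj]
  exact entry_norm_bound_of_unitary U.2 _ _

lemma moment_translate (hμ : ∀ g : UG n, μ.map (fun x => g * x) = μ) (ε : ι → Bool)
    (c e : ι → Fin n) (g : UG n) :
    moment μ ε c e = ∫ U : UG n, ∏ s, cj (ε s)
      (((g : Matrix (Fin n) (Fin n) ℂ) * (U : Matrix (Fin n) (Fin n) ℂ)) (e s) (c s)) ∂μ := by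
  have hc : Continuous fun x : UG n => g * x := continuous_const.mul continuous_id
  conv_lhs => rw [moment, ← hμ g]
  rw [integral_map hc.measurable.aemeasurable
    (continuous_entry_prod ε c e).measurable.aestronglyMeasurable]
  rfl

/-- Left invariance, expanded: a moment is a tensor in its row indices fixed by every unitary `g`. -/
lemma moment_eq_sum [IsProbabilityMeasure μ] (hμ : ∀ g : UG n, μ.map (fun x => g * x) = μ)
    [DecidableEq ι] (ε : ι → Bool) (c e : ι → Fin n) (g : UG n) :
    moment μ ε c e = ∑ e' : ι → Fin n,
      (∏ s, cj (ε s) ((g : Matrix (Fin n) (Fin n) ℂ) (e s) (e' s))) * moment μ ε c e' := by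
  rw [moment_translate μ hμ ε c e g]
  have : ∀ U : UG n, ∏ s, cj (ε s)
      (((g : Matrix (Fin n) (Fin n) ℂ) * (U : Matrix (Fin n) (Fin n) ℂ)) (e s) (c s)) =
      ∑ e' : ι → Fin n, (∏ s, cj (ε s) ((g : Matrix (Fin n) (Fin n) ℂ) (e s) (e' s))) *
        ∏ s, cj (ε s) ((U : Matrix (Fin n) (Fin n) ℂ) (e' s) (c s)) := by
    intro U
    simp only [Matrix.mul_apply, map_sum, map_mul, ← Finset.prod_mul_distrib]
    rw [Finset.prod_univ_sum, Fintype.piFinset_univ]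
  simp only [this]
  rw [integral_finsetSum _ fun e' _ => (integrable_entry_prod μ ε c e').const_mul _]
  simp only [integral_const_mul, moment]

lemma moment_perm (hμ : ∀ g : UG n, μ.map (fun x => g * x) = μ)
    (ε : ι → Bool) (c e : ι → Fin n) (π : Equiv.Perm (Fin n)) :
    moment μ ε c (π ∘ e) = moment μ ε c e := by
  have hmem : π.permMatrix ℂ ∈ Matrix.unitaryGroup (Fin n) ℂ := by
    rw [Matrix.mem_unitaryGroup_iff, Matrix.star_eq_conjTranspose, Matrix.conjTranspose_permMatrix,
      ← Matrix.permMatrix_mul]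
    simp
  rw [moment_translate μ hμ ε c e ⟨_, hmem⟩, moment]
  simp [Equiv.Perm.permMatrix, PEquiv.toMatrix_toPEquiv_mul]

/-- Invariance under the diagonal matrix with entry `z` at `x` multiplies the moment by `z ^ (p - p')`,
where `p` and `p'` count the plain and conjugated factors in row `x`; `z` is taken to be a root of
unity of order exceeding `p` and `p'`, so a nonzero moment forces the two counts to agree. -/
lemma moment_weight (hμ : ∀ g : UG n, μ.map (fun x => g * x) = μ)
    (ε : ι → Bool) (c e : ι → Fin n) (h : moment μ ε c e ≠ 0) (x : Fin n) :
    #{s | ε s = false ∧ e s = x} = #{s | ε s = true ∧ e s = x} := by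
  set p := #{s | ε s = false ∧ e s = x} with hp
  set p' := #{s | ε s = true ∧ e s = x} with hp'
  have hN : p + p' + 1 ≠ 0 := by omega
  obtain ⟨z, hz⟩ : ∃ z : ℂ, IsPrimitiveRoot z (p + p' + 1) :=
    ⟨_, Complex.isPrimitiveRoot_exp _ hN⟩
  have hz1 : ‖z‖ = 1 := hz.norm'_eq_one hN
  have hzz : z * star z = 1 := by
    rw [← starRingEnd_apply, Complex.mul_conj, Complex.normSq_eq_norm_sq, hz1]; simp
  set d : Fin n → ℂ := fun y => if y = x then z else 1 with hd
  have hmem : Matrix.diagonal d ∈ Matrix.unitaryGroup (Fin n) ℂ := by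
    rw [Matrix.mem_unitaryGroup_iff, Matrix.star_eq_conjTranspose, Matrix.diagonal_conjTranspose,
      Matrix.diagonal_mul_diagonal, ← Matrix.diagonal_one]
    congr 1
    funext y
    by_cases hy : y = x <;> simp [hd, hy]
    exact hzz
  have h1 := moment_translate μ hμ ε c e ⟨_, hmem⟩
  simp only [Matrix.diagonal_mul, map_mul, Finset.prod_mul_distrib, integral_const_mul] at h1
  change moment μ ε c e = _ * moment μ ε c e at h1
  have h2 : ∏ s, cj (ε s) (d (e s)) = 1 := by
    have := mul_right_cancel₀ h ((one_mul _).trans h1)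
    exact this.symm
  have h3 : ∏ s, cj (ε s) (d (e s)) = z ^ p * star z ^ p' := by
    have : ∀ s, cj (ε s) (d (e s)) = (if ε s = false ∧ e s = x then z else 1) *
        (if ε s = true ∧ e s = x then star z else 1) := by
      intro s
      by_cases hs : e s = x <;> cases hε : ε s <;> simp [hd, hs]
    simp only [this, Finset.prod_mul_distrib, Finset.prod_ite, Finset.prod_const, one_pow,
      mul_one, hp, hp']
  rw [h3] at h2
  have h4 : z ^ p = z ^ p' := by
    calc z ^ p = z ^ p * (z * star z) ^ p' := by rw [hzz]; simp
      _ = (z ^ p * star z ^ p') * z ^ p' := by rw [mul_pow]; ring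
      _ = z ^ p' := by rw [h2, one_mul]
  exact hz.pow_inj (by omega) (by omega) h4

/-- Rotation by `θ` in the plane of `x` and `y`. -/
noncomputable def rot (x y : Fin n) (θ : ℝ) : Matrix (Fin n) (Fin n) ℂ :=
  1 + ((Real.cos θ - 1 : ℝ) : ℂ) • (Matrix.single x x 1 + Matrix.single y y 1) +
    ((Real.sin θ : ℝ) : ℂ) • (Matrix.single y x 1 - Matrix.single x y 1)

lemma rot_mem {x y : Fin n} (hxy : x ≠ y) (θ : ℝ) :
    rot x y θ ∈ Matrix.unitaryGroup (Fin n) ℂ := by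
  set P : Matrix (Fin n) (Fin n) ℂ := Matrix.single x x 1 + Matrix.single y y 1 with hP
  set J : Matrix (Fin n) (Fin n) ℂ := Matrix.single y x 1 - Matrix.single x y 1 with hJ
  have hPP : P * P = P := by
    simp [hP, add_mul, mul_add, hxy, hxy.symm]
  have hPJ : P * J = J := by
    simp [hP, hJ, add_mul, mul_sub, hxy, hxy.symm]
  have hJP : J * P = J := by
    simp [hP, hJ, sub_mul, mul_add, hxy, hxy.symm]
    exact (sub_eq_add_neg _ _).symm
  have hJJ : J * J = -P := by
    simp [hP, hJ, sub_mul, mul_sub, hxy, hxy.symm]; abel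
  have hPs : star P = P := by
    simp [hP, Matrix.star_eq_conjTranspose]
  have hJs : star J = -J := by
    simp [hJ, Matrix.star_eq_conjTranspose]
  have hcs : ((Real.cos θ : ℝ) : ℂ) ^ 2 + ((Real.sin θ : ℝ) : ℂ) ^ 2 = 1 := by
    rw [← Complex.ofReal_pow, ← Complex.ofReal_pow, ← Complex.ofReal_add, Real.cos_sq_add_sin_sq]
    simp
  rw [Matrix.mem_unitaryGroup_iff, rot, ← hP, ← hJ]
  simp only [star_add, star_smul, star_one, hPs, hJs, add_mul, mul_add, mul_one, one_mul,
    smul_mul_assoc, mul_smul_comm, hPP, hPJ, hJP, hJJ, mul_neg, smul_neg,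
    Complex.star_def, Complex.conj_ofReal]
  push_cast
  have : (2 * ((Real.cos θ : ℂ) - 1) + ((Real.cos θ : ℂ) - 1) * ((Real.cos θ : ℂ) - 1) +
      (Real.sin θ : ℂ) * (Real.sin θ : ℂ)) = 0 := by linear_combination hcs
  calc _ = 1 + (2 * ((Real.cos θ : ℂ) - 1) + ((Real.cos θ : ℂ) - 1) * ((Real.cos θ : ℂ) - 1) +
      (Real.sin θ : ℂ) * (Real.sin θ : ℂ)) • P := by push_cast; module
    _ = 1 := by rw [this, zero_smul, add_zero]

/-- Infinitesimal rotation invariance: the derivative at `θ = 0` of the invariance under `rot x y θ`.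
The rotation is real, so plain and conjugated factors behave alike. -/
lemma moment_lie [IsProbabilityMeasure μ] (hμ : ∀ g : UG n, μ.map (fun x => g * x) = μ)
    [DecidableEq ι] (ε : ι → Bool) (c e : ι → Fin n) (x y : Fin n) (hxy : x ≠ y) :
    ∑ s, ((if e s = y then moment μ ε c (Function.update e s x) else 0) -
      (if e s = x then moment μ ε c (Function.update e s y) else 0)) = 0 := by
  set X : Matrix (Fin n) (Fin n) ℂ := Matrix.single y x 1 - Matrix.single x y 1 with hX
  have hderiv : ∀ (b : Bool) (r z : Fin n),
      HasDerivAt (fun θ : ℝ => cj b (rot x y θ r z)) (X r z) 0 := by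
    intro b r z
    have h0 : ∀ θ : ℝ, cj b (rot x y θ r z) = (1 : Matrix (Fin n) (Fin n) ℂ) r z +
        ((Real.cos θ - 1 : ℝ) : ℂ) * (Matrix.single x x (1:ℂ) + Matrix.single y y 1 :
          Matrix (Fin n) (Fin n) ℂ) r z + ((Real.sin θ : ℝ) : ℂ) * X r z := by
      intro θ
      simp only [rot, hX, Matrix.add_apply, Matrix.smul_apply, Matrix.sub_apply, smul_eq_mul,
        map_add, map_mul, cj_ofReal, map_sub, Matrix.single_apply, Matrix.one_apply, apply_ite (cj b),
        map_one, map_zero]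
    simp only [h0]
    have hc : HasDerivAt (fun θ : ℝ => ((Real.cos θ - 1 : ℝ) : ℂ)) 0 0 := by
      have := ((Real.hasDerivAt_cos 0).sub_const 1).ofReal_comp
      simpa using this
    have hs : HasDerivAt (fun θ : ℝ => ((Real.sin θ : ℝ) : ℂ)) 1 0 := by
      have := (Real.hasDerivAt_sin 0).ofReal_comp
      simpa using this
    have := ((hc.mul_const ((Matrix.single x x (1:ℂ) + Matrix.single y y 1 :
          Matrix (Fin n) (Fin n) ℂ) r z)).const_add ((1 : Matrix (Fin n) (Fin n) ℂ) r z)).fun_add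
        (hs.mul_const (X r z))
    simpa using this
  have hzero : ∀ (b : Bool) (r z : Fin n), cj b (rot x y 0 r z) = if r = z then 1 else 0 := by
    intro b r z
    simp [rot, Matrix.one_apply, apply_ite (cj b)]
  have h1 : HasDerivAt (fun θ : ℝ => ∑ e' : ι → Fin n,
      (∏ s, cj (ε s) (rot x y θ (e s) (e' s))) * moment μ ε c e')
      (∑ e' : ι → Fin n, (∑ s, (∏ t ∈ univ.erase s, cj (ε t) (rot x y 0 (e t) (e' t))) •
        X (e s) (e' s)) * moment μ ε c e') 0 :=
    HasDerivAt.fun_sum fun e' _ => (HasDerivAt.fun_finsetProd fun s _ => hderiv _ _ _).mul_const _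
  have h2 : (fun θ : ℝ => ∑ e' : ι → Fin n,
      (∏ s, cj (ε s) (rot x y θ (e s) (e' s))) * moment μ ε c e') =
      fun _ => moment μ ε c e := by
    funext θ
    exact (moment_eq_sum μ hμ ε c e ⟨_, rot_mem hxy θ⟩).symm
  rw [h2] at h1
  have h3 := h1.unique (hasDerivAt_const _ _)
  refine Eq.trans ?_ h3
  simp only [Finset.sum_mul]
  rw [Finset.sum_comm]
  refine Finset.sum_congr rfl fun s _ => ?_
  have h4 : ∀ e' : ι → Fin n, (∏ t ∈ univ.erase s, cj (ε t) (rot x y 0 (e t) (e' t))) =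
      if ∀ t, t ≠ s → e t = e' t then 1 else 0 := by
    intro e'
    simp only [hzero]
    rw [Finset.prod_ite_zero]
    simp
  have h5 : ∀ F : (ι → Fin n) → ℂ, (∑ e' : ι → Fin n,
      (if ∀ t, t ≠ s → e t = e' t then (1:ℂ) else 0) * F e') =
      ∑ z, F (Function.update e s z) := by
    intro F
    simp only [ite_mul, one_mul, zero_mul]
    rw [← Finset.sum_filter]
    symm
    refine Finset.sum_bij (fun z _ => Function.update e s z) ?_ ?_ ?_ ?_
    · intro z _
      simp only [Finset.mem_filter, Finset.mem_univ, true_and]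
      intro t ht
      simp [ht]
    · intro z _ z' _ h
      simpa using congrFun h s
    · intro e' he'
      simp only [Finset.mem_filter, Finset.mem_univ, true_and] at he'
      refine ⟨e' s, Finset.mem_univ _, ?_⟩
      funext t
      by_cases ht : t = s
      · subst ht; simp
      · simp [ht, he' t ht]
    · intros; rfl
  simp only [h4, smul_eq_mul, mul_assoc]
  rw [h5 fun e' => X (e s) (e' s) * moment μ ε c e']
  simp only [Function.update_self, hX, Matrix.sub_apply, Matrix.single_apply, sub_mul, ite_and,
    ite_mul, one_mul, zero_mul, Finset.sum_sub_distrib]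
  simp [eq_comm]

end Moment

/-! ### Convolution and the Weingarten function -/

section Conv

variable {G : Type*} [Group G] [Fintype G] {R : Type*} [CommRing R]

lemma conv_assoc (f g h : G → R) : conv (conv f g) h = conv f (conv g h) := by
  funext σ
  simp only [conv, Finset.sum_mul, Finset.mul_sum]
  rw [Finset.sum_comm]
  refine Finset.sum_congr rfl fun ρ _ => ?_
  rw [← Equiv.sum_comp (Equiv.mulLeft ρ)]
  refine Finset.sum_congr rfl fun τ _ => ?_
  simp [mul_assoc]

lemma conv_comp_inv (f g : G → R) (σ : G) :
    conv f g σ⁻¹ = conv (fun τ => g τ⁻¹) (fun τ => f τ⁻¹) σ := by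
  simp only [conv]
  rw [← Equiv.sum_comp (Equiv.mulLeft σ⁻¹)]
  refine Finset.sum_congr rfl fun τ _ => ?_
  simp [mul_comm, mul_assoc]

end Conv

lemma conv_deltaId {q : ℕ} (f : Equiv.Perm (Fin q) → ℂ) : conv f deltaId = f := by
  funext σ
  simp [conv, deltaId, inv_mul_eq_one]

lemma deltaId_conv {q : ℕ} (f : Equiv.Perm (Fin q) → ℂ) : conv deltaId f = f := by
  funext σ
  simp [conv, deltaId]

/-- The unitary Weingarten function is invariant under `σ ↦ σ⁻¹`: since `cyc` is, `σ ↦ W σ⁻¹` is a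
left inverse of `σ ↦ n ^ cyc σ`, and a left inverse agrees with a right inverse. -/
lemma weingarten_inv {q n : ℕ} (W : Equiv.Perm (Fin q) → ℂ)
    (hW : conv (fun σ => (n : ℂ) ^ cyc σ) W = deltaId) (σ : Equiv.Perm (Fin q)) :
    W σ⁻¹ = W σ := by
  have h : conv (fun τ => W τ⁻¹) (fun σ => (n : ℂ) ^ cyc σ) = deltaId := by
    funext τ
    have := conv_comp_inv (fun σ => (n : ℂ) ^ cyc σ) W τ
    simp only [cyc_inv] at this
    rw [← this, hW]
    simp [deltaId]
  have h2 := conv_assoc (fun τ => W τ⁻¹) (fun σ => (n : ℂ) ^ cyc σ) W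
  rw [h, hW, conv_deltaId, deltaId_conv] at h2
  exact (congrFun h2 σ).symm

/-! ### The unitary Weingarten formula -/

/-- `E[∏ₛ u_{a(s) i(s)} · conj ∏ₜ u_{b(t) j(t)}]`. -/
noncomputable def umoment {n q q' : ℕ} (μ : Measure (UG n)) (i : Fin q → Fin n)
    (j : Fin q' → Fin n) (a : Fin q → Fin n) (b : Fin q' → Fin n) : ℂ :=
  moment μ (Sum.elim (fun _ => false) fun _ => true) (Sum.elim i j) (Sum.elim a b)

section UMoment

variable {n q q' : ℕ} (μ : Measure (UG n))

lemma umoment_eq (i a : Fin q → Fin n) (j b : Fin q' → Fin n) :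
    umoment μ i j a b = ∫ U : UG n, (∏ s, (U : Matrix (Fin n) (Fin n) ℂ) (a s) (i s)) *
      star (∏ s, (U : Matrix (Fin n) (Fin n) ℂ) (b s) (j s)) ∂μ := by
  simp [umoment, moment, Fintype.prod_sum_type]

lemma integrable_umoment [IsProbabilityMeasure μ] (i a : Fin q → Fin n) (j b : Fin q' → Fin n) :
    Integrable (fun U : UG n => (∏ s, (U : Matrix (Fin n) (Fin n) ℂ) (a s) (i s)) *
      star (∏ s, (U : Matrix (Fin n) (Fin n) ℂ) (b s) (j s))) μ := by
  have := integrable_entry_prod μ (Sum.elim (fun _ => false) fun _ => true)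
    (Sum.elim i j) (Sum.elim a b)
  simpa [Fintype.prod_sum_type] using this

lemma umoment_weight (hμ : ∀ g : UG n, μ.map (fun x => g * x) = μ)
    (i a : Fin q → Fin n) (j b : Fin q' → Fin n) (h : umoment μ i j a b ≠ 0) (x : Fin n) :
    #{s | a s = x} = #{s | b s = x} := by
  have := moment_weight μ hμ _ _ _ h x
  rw [← Fintype.card_subtype, ← Fintype.card_subtype] at this
  rw [Fintype.card_congr (Equiv.subtypeSum ..), Fintype.card_congr (Equiv.subtypeSum ..)] at this
  simpa [Fintype.card_subtype] using this

/-- A moment with different numbers of `u` and `conj u` factors vanishes: the row weights must balance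
for every value, hence also in total. -/
lemma umoment_eq_zero (hμ : ∀ g : UG n, μ.map (fun x => g * x) = μ) (hq : q ≠ q')
    (i a : Fin q → Fin n) (j b : Fin q' → Fin n) : umoment μ i j a b = 0 := by
  by_contra h
  have h1 := Finset.card_eq_sum_card_fiberwise (s := univ) (t := univ) (f := a) (by simp)
  have h2 := Finset.card_eq_sum_card_fiberwise (s := univ) (t := univ) (f := b) (by simp)
  simp only [umoment_weight μ hμ i a j b h] at h1
  rw [← h2] at h1
  simp at h1
  exact hq h1

/-- As a tensor in its row indices, a unitary moment is a combination of permutations. -/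
lemma exists_coeff [IsProbabilityMeasure μ] (hμ : ∀ g : UG n, μ.map (fun x => g * x) = μ)
    (hq : q ≤ n) (i j : Fin q → Fin n) :
    ∃ c : Equiv.Perm (Fin q) → ℂ, ∀ a b : Fin q → Fin n,
      umoment μ i j a b = ∑ σ : Equiv.Perm (Fin q), if a ∘ σ = b then c σ else 0 := by
  refine invariant_eq_sum_perm hq _ (fun a b h => umoment_weight μ hμ i a j b h) ?_ ?_
  · intro π a b
    rw [umoment, ← Sum.comp_elim, moment_perm μ hμ]
    rfl
  · intro a b x y hxy
    have := moment_lie μ hμ (Sum.elim (fun _ => false) fun _ => true) (Sum.elim i j)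
      (Sum.elim a b) x y hxy
    rw [Fintype.sum_sum_type] at this
    simp only [Sum.elim_inl, Sum.elim_inr, Sum.update_elim_inl, Sum.update_elim_inr] at this
    exact this

/-- Contracting the row indices of a unitary moment along `τ` leaves, by `U* U = 1`, a constant
integrand. -/
lemma sum_umoment_comp [IsProbabilityMeasure μ] (i j : Fin q → Fin n)
    (τ : Equiv.Perm (Fin q)) :
    ∑ a : Fin q → Fin n, umoment μ i j a (a ∘ τ) = deltaP τ i j := by
  simp only [umoment_eq]
  rw [← integral_finsetSum _ fun a _ => integrable_umoment μ i a j (a ∘ τ)]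
  have h : ∀ U : UG n, ∑ a : Fin q → Fin n, (∏ s, (U : Matrix (Fin n) (Fin n) ℂ) (a s) (i s)) *
      star (∏ s, (U : Matrix (Fin n) (Fin n) ℂ) ((a ∘ τ) s) (j s)) = deltaP τ i j := by
    intro U
    have h1 : ∀ a : Fin q → Fin n, (∏ s, (U : Matrix (Fin n) (Fin n) ℂ) (a s) (i s)) *
        star (∏ s, (U : Matrix (Fin n) (Fin n) ℂ) ((a ∘ τ) s) (j s)) =
        ∏ s, star ((U : Matrix (Fin n) (Fin n) ℂ) ((a ∘ τ) s) (j s)) *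
          (U : Matrix (Fin n) (Fin n) ℂ) ((a ∘ τ) s) (i (τ s)) := by
      intro a
      rw [← Equiv.prod_comp τ, star_prod, mul_comm, ← Finset.prod_mul_distrib]
      rfl
    simp only [h1]
    refine (Fintype.sum_equiv (Equiv.arrowCongr τ.symm (Equiv.refl (Fin n))) _
      (fun a : Fin q → Fin n => ∏ s, star ((U : Matrix (Fin n) (Fin n) ℂ) (a s) (j s)) *
          (U : Matrix (Fin n) (Fin n) ℂ) (a s) (i (τ s))) fun a => rfl).trans ?_
    have h4 := (Finset.prod_univ_sum (fun _ : Fin q => (univ : Finset (Fin n)))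
      (fun s x => star ((U : Matrix (Fin n) (Fin n) ℂ) x (j s)) *
        (U : Matrix (Fin n) (Fin n) ℂ) x (i (τ s)))).symm
    rw [Fintype.piFinset_univ] at h4
    refine h4.trans ?_
    rw [deltaP]
    refine Finset.prod_congr rfl fun s _ => ?_
    have h2 : (star (U : Matrix (Fin n) (Fin n) ℂ) * (U : Matrix (Fin n) (Fin n) ℂ)) = 1 :=
      Matrix.mem_unitaryGroup_iff'.mp U.2
    have h3 := congrFun (congrFun h2 (j s)) (i (τ s))
    rw [Matrix.mul_apply, Matrix.one_apply] at h3
    simp only [Matrix.star_apply] at h3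
    rw [h3]
    simp only [eq_comm]
  simp only [h]
  simp

/-- The unitary Weingarten formula. The coefficients `c` of `exists_coeff` satisfy
`c * n ^ cyc = δ_•(i, j)` by contraction, so `c = δ_•(i, j) * W`. -/
theorem umoment_formula [IsProbabilityMeasure μ] (hμ : ∀ g : UG n, μ.map (fun x => g * x) = μ)
    (hq : q ≤ n) (W : Equiv.Perm (Fin q) → ℂ)
    (hW : conv (fun σ => (n : ℂ) ^ cyc σ) W = deltaId) (i j a b : Fin q → Fin n) :
    umoment μ i j a b = ∑ σ : Equiv.Perm (Fin q),
      if a ∘ σ = b then conv (fun τ => deltaP τ i j) W σ else 0 := by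
  obtain ⟨c, hc⟩ := exists_coeff μ hμ hq i j
  have h1 : conv c (fun σ => (n : ℂ) ^ cyc σ) = fun τ => deltaP τ i j := by
    funext τ
    rw [← sum_umoment_comp μ i j τ]
    simp only [hc]
    rw [Finset.sum_comm, conv]
    refine Finset.sum_congr rfl fun σ _ => ?_
    rw [← Finset.sum_filter, Finset.sum_const, card_comp_eq_comp, nsmul_eq_mul]
    push_cast
    ring
  have h2 := conv_assoc c (fun σ => (n : ℂ) ^ cyc σ) W
  rw [h1, hW, conv_deltaId] at h2
  rw [h2, hc]

end UMoment

/-! ### Moments of `Uᵀ U` -/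

lemma prod_lo_hi {k : ℕ} (F : Fin (2 * k) → ℂ) : ∏ t, F t = ∏ s : Fin k, F (lo s) * F (hi s) := by
  have hbij : Function.Bijective (Sum.elim lo hi : Fin k ⊕ Fin k → Fin (2 * k)) := by
    constructor
    · rintro (s | s) (t | t) h <;> simp [lo, hi, Fin.ext_iff] at h ⊢ <;> omega
    · intro t
      rcases eq_lo_or_hi t with h | h
      · exact ⟨Sum.inl (half t), h.symm⟩
      · exact ⟨Sum.inr (half t), h.symm⟩
  rw [Finset.prod_mul_distrib, ← Equiv.prod_comp (Equiv.ofBijective _ hbij),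
    Fintype.prod_sum_type]
  rfl

/-- A product of entries of `Uᵀ U` is a sum, over row indices constant on the blocks `{2r, 2r+1}`, of
products of entries of `U`. -/
lemma prod_coe_entry {n k : ℕ} (U : Matrix (Fin n) (Fin n) ℂ) (i : Fin (2 * k) → Fin n) :
    ∏ s : Fin k, (Uᵀ * U) (i (lo s)) (i (hi s)) =
      ∑ p : Fin k → Fin n, ∏ t, U ((p ∘ half) t) (i t) := by
  simp only [Matrix.mul_apply, Matrix.transpose_apply, prod_lo_hi, Function.comp_apply, half_lo,
    half_hi]
  rw [Finset.prod_univ_sum, Fintype.piFinset_univ]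

lemma integral_coe {n k l : ℕ} (μ : Measure (UG n)) [IsProbabilityMeasure μ]
    (i : Fin (2 * k) → Fin n) (j : Fin (2 * l) → Fin n) :
    ∫ U : UG n, (∏ s : Fin k,
          ((U : Matrix (Fin n) (Fin n) ℂ)ᵀ * (U : Matrix (Fin n) (Fin n) ℂ))
            (i (lo s)) (i (hi s))) *
        star (∏ s : Fin l,
          ((U : Matrix (Fin n) (Fin n) ℂ)ᵀ * (U : Matrix (Fin n) (Fin n) ℂ))
            (j (lo s)) (j (hi s))) ∂μ =
      ∑ p : (Fin k → Fin n) × (Fin l → Fin n),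
        umoment μ i j (p.1 ∘ half) (p.2 ∘ half) := by
  simp only [prod_coe_entry, star_sum, Finset.sum_mul_sum, ← Fintype.sum_prod_type']
  rw [integral_finsetSum _ fun p _ => integrable_umoment μ i (p.1 ∘ half) j (p.2 ∘ half)]
  simp only [umoment_eq]

/-- Weingarten calculus for the circular orthogonal ensemble `V = UᵀU`. -/
theorem stmt6 (n k : ℕ) (hk : 0 < k) (hnk : 2 * k ≤ n)
    (μ : Measure (UG n)) [IsProbabilityMeasure μ]
    (hμ : ∀ g : UG n, μ.map (fun x => g * x) = μ)
    (WgU : Equiv.Perm (Fin (2 * k)) → ℂ)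
    (hWg : conv (fun σ => (n : ℂ) ^ cyc σ) WgU = deltaId)
    (hWg' : conv WgU (fun σ => (n : ℂ) ^ cyc σ) = deltaId)
    (i j : Fin (2 * k) → Fin n)
    (m k' l' : ℕ) (hm : 1 ≤ m) (hkl : k' ≠ l')
    (ν : Measure (UG m)) [IsProbabilityMeasure ν]
    (hν : ∀ g : UG m, ν.map (fun x => g * x) = ν) :
    (∫ U : UG n, (∏ s : Fin k,
          ((U : Matrix (Fin n) (Fin n) ℂ)ᵀ * (U : Matrix (Fin n) (Fin n) ℂ))
            (i (lo s)) (i (hi s))) *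
        star (∏ s : Fin k,
          ((U : Matrix (Fin n) (Fin n) ℂ)ᵀ * (U : Matrix (Fin n) (Fin n) ℂ))
            (j (lo s)) (j (hi s))) ∂μ
      = ∑ σ : Equiv.Perm (Fin (2 * k)),
          deltaP σ i j * conv (fun τ => (n : ℂ) ^ ccount τ) WgU σ) ∧
    ∀ (i' : Fin (2 * k') → Fin m) (j' : Fin (2 * l') → Fin m),
      ∫ U : UG m, (∏ s : Fin k',
          ((U : Matrix (Fin m) (Fin m) ℂ)ᵀ * (U : Matrix (Fin m) (Fin m) ℂ))
            (i' (lo s)) (i' (hi s))) *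
        star (∏ s : Fin l',
          ((U : Matrix (Fin m) (Fin m) ℂ)ᵀ * (U : Matrix (Fin m) (Fin m) ℂ))
            (j' (lo s)) (j' (hi s))) ∂ν = 0 := by
  constructor
  · rw [integral_coe]
    simp only [umoment_formula μ hμ hnk WgU hWg]
    rw [Finset.sum_comm]
    have h1 : ∀ σ : Equiv.Perm (Fin (2 * k)),
        (∑ p : (Fin k → Fin n) × (Fin k → Fin n), if (p.1 ∘ half) ∘ σ = p.2 ∘ half then
          conv (fun τ => deltaP τ i j) WgU σ else 0) =
        ∑ τ, deltaP τ i j * ((n : ℂ) ^ ccount σ * WgU (σ⁻¹ * τ)) := by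
      intro σ
      rw [← Finset.sum_filter, Finset.sum_const, card_pairs, nsmul_eq_mul, conv, Finset.mul_sum]
      refine Finset.sum_congr rfl fun τ _ => ?_
      rw [← weingarten_inv WgU hWg (σ⁻¹ * τ), _root_.mul_inv_rev, inv_inv]
      push_cast
      ring
    simp only [h1]
    simp only [conv, Finset.mul_sum]
    rw [Finset.sum_comm]
  · intro i' j'
    rw [integral_coe]
    exact Finset.sum_eq_zero fun p _ => umoment_eq_zero ν hν (by omega) _ _ _ _

end WgPaper
end
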